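/- arXiv:0905.2746 — 3 statements merged into one kernel-verified Lean document; each statement's English description precedes it below -/
import Mathlib

section
/- Suppose ζ is a primitive d-th root of unity and that m is even or char K = 2. Then the K-algebra homomorphism K[X,Y,W]/⟨W^m − ε X Y⟩ → Z_gr(E(Λ_q)) determined by X ↦ x, Y ↦ y, W ↦ w is an isomorphism; in particular Z_gr(E(Λ_q)) is generated as a K-algebra by x, y, w subject only to the relation w^m = ε x y. -/
open scoped BigOperators

noncomputable section

/-- Generators of the path algebra: trivial paths `e i`, arrows `a i : i → i+1`
and `abar i : i+1 → i`. -/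
inductive Gen (m : ℕ) : Type
  | e : ZMod m → Gen m
  | a : ZMod m → Gen m
  | abar : ZMod m → Gen m

/-- The free associative algebra on the generators. -/
abbrev FA (K : Type) [Field K] (m : ℕ) : Type := FreeAlgebra K (Gen m)

def Ee (K : Type) [Field K] (m : ℕ) (i : ZMod m) : FA K m := FreeAlgebra.ι K (Gen.e i)
def Aa (K : Type) [Field K] (m : ℕ) (i : ZMod m) : FA K m := FreeAlgebra.ι K (Gen.a i)
def Bb (K : Type) [Field K] (m : ℕ) (i : ZMod m) : FA K m := FreeAlgebra.ι K (Gen.abar i)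

/-- The defining relations of the path algebra KQ. -/
inductive PathRel (K : Type) [Field K] (m : ℕ) [NeZero m] : FA K m → FA K m → Prop
  | orth : ∀ i j : ZMod m, i ≠ j → PathRel K m (Ee K m i * Ee K m j) 0
  | idem : ∀ i : ZMod m, PathRel K m (Ee K m i * Ee K m i) (Ee K m i)
  | total : PathRel K m (∑ i : ZMod m, Ee K m i) 1
  | asrc : ∀ i : ZMod m, PathRel K m (Ee K m i * Aa K m i) (Aa K m i)
  | atgt : ∀ i : ZMod m, PathRel K m (Aa K m i * Ee K m (i + 1)) (Aa K m i)
  | bsrc : ∀ i : ZMod m, PathRel K m (Ee K m (i + 1) * Bb K m i) (Bb K m i)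
  | btgt : ∀ i : ZMod m, PathRel K m (Bb K m i * Ee K m i) (Bb K m i)

/-- The path algebra KQ. -/
abbrev PathAlg (K : Type) [Field K] (m : ℕ) [NeZero m] : Type := RingQuot (PathRel K m)

def pe (K : Type) [Field K] (m : ℕ) [NeZero m] (i : ZMod m) : PathAlg K m :=
  RingQuot.mkAlgHom K (PathRel K m) (Ee K m i)
def pa (K : Type) [Field K] (m : ℕ) [NeZero m] (i : ZMod m) : PathAlg K m :=
  RingQuot.mkAlgHom K (PathRel K m) (Aa K m i)
def pb (K : Type) [Field K] (m : ℕ) [NeZero m] (i : ZMod m) : PathAlg K m :=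
  RingQuot.mkAlgHom K (PathRel K m) (Bb K m i)

/-- The relations defining the Koszul dual (Ext algebra) of `Λ_q`:
`q_i⁻¹ a_i ā_i + ā_{i-1} a_{i-1} = 0`. -/
inductive ExtRel (K : Type) [Field K] (m : ℕ) [NeZero m] (q : ZMod m → K) :
    PathAlg K m → PathAlg K m → Prop
  | rel : ∀ i : ZMod m,
      ExtRel K m q ((q i)⁻¹ • (pa K m i * pb K m i) + pb K m (i - 1) * pa K m (i - 1)) 0

/-- The Ext algebra `E(Λ_q)`. -/
abbrev ExtAlg (K : Type) [Field K] (m : ℕ) [NeZero m] (q : ZMod m → K) : Type :=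
  RingQuot (ExtRel K m q)

def xe (K : Type) [Field K] (m : ℕ) [NeZero m] (q : ZMod m → K) (i : ZMod m) :
    ExtAlg K m q := RingQuot.mkAlgHom K (ExtRel K m q) (pe K m i)
def xa (K : Type) [Field K] (m : ℕ) [NeZero m] (q : ZMod m → K) (i : ZMod m) :
    ExtAlg K m q := RingQuot.mkAlgHom K (ExtRel K m q) (pa K m i)
def xb (K : Type) [Field K] (m : ℕ) [NeZero m] (q : ZMod m → K) (i : ZMod m) :
    ExtAlg K m q := RingQuot.mkAlgHom K (ExtRel K m q) (pb K m i)

/-- `γ_i^n`, the image of the path `a_i a_{i+1} ⋯ a_{i+n-1}` in `E(Λ_q)`. -/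
def gam (K : Type) [Field K] (m : ℕ) [NeZero m] (q : ZMod m → K) (i : ZMod m) :
    ℕ → ExtAlg K m q
  | 0 => xe K m q i
  | n + 1 => xa K m q i * gam K m q (i + 1) n

/-- `δ_i^n`, the image of the path `ā_{i+n-1} ⋯ ā_{i+1} ā_i` in `E(Λ_q)`. -/
def del (K : Type) [Field K] (m : ℕ) [NeZero m] (q : ZMod m → K) (i : ZMod m) :
    ℕ → ExtAlg K m q
  | 0 => xe K m q i
  | n + 1 => xb K m q (i + (n : ZMod m)) * del K m q i n

/-- Homogeneity of path-length degree `n` in `E(Λ_q)`: membership in the span of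
the (images of) paths of length `n`, i.e. of the monomials `γ_i^s δ_j^t` with `s + t = n`. -/
def Homog (K : Type) [Field K] (m : ℕ) [NeZero m] (q : ZMod m → K) (n : ℕ)
    (z : ExtAlg K m q) : Prop :=
  z ∈ Submodule.span K
    {x : ExtAlg K m q | ∃ (i j : ZMod m) (s t : ℕ), s + t = n ∧ x = gam K m q i s * del K m q j t}

/-- The graded centre of `E(Λ_q)`: the subalgebra generated by all homogeneous elements `z`
of degree `n` such that `z g = (-1)^{n n'} g z` for all homogeneous `g` of degree `n'`. -/
def ZGr (K : Type) [Field K] (m : ℕ) [NeZero m] (q : ZMod m → K) :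
    Subalgebra K (ExtAlg K m q) :=
  Algebra.adjoin K
    {z : ExtAlg K m q | ∃ n : ℕ, Homog K m q n z ∧
      ∀ (n' : ℕ) (g : ExtAlg K m q), Homog K m q n' g →
        z * g = ((-1 : K) ^ (n * n')) • (g * z)}

/-- The product `q_k q_{k+1} ⋯ q_{k+len-1}` (subscripts modulo `m`). -/
def qblock (K : Type) [Field K] (m : ℕ) [NeZero m] (q : ZMod m → K) (k len : ℕ) : K :=
  ∏ j ∈ Finset.range len, q ((k + j : ℕ) : ZMod m)

/-- The coefficient `∏_{k=1}^{i} (q_k ⋯ q_{k+len-1})⁻¹`. -/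
def wcoef (K : Type) [Field K] (m : ℕ) [NeZero m] (q : ZMod m → K) (i len : ℕ) : K :=
  ∏ k ∈ Finset.Icc 1 i, (qblock K m q k len)⁻¹


section helpers

set_option linter.unusedSectionVars false
set_option linter.unusedSimpArgs false

variable {K : Type} [Field K] {m : ℕ} [NeZero m] (q : ZMod m → K)

lemma hx_e_idem (i : ZMod m) : xe K m q i * xe K m q i = xe K m q i := by
  have := RingQuot.mkAlgHom_rel K (PathRel.idem (K := K) (m := m) i)
  have := congrArg (RingQuot.mkAlgHom K (ExtRel K m q)) this
  simpa [xe, pe] using this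

lemma hx_e_orth (i j : ZMod m) (h : i ≠ j) : xe K m q i * xe K m q j = 0 := by
  have := RingQuot.mkAlgHom_rel K (PathRel.orth (K := K) (m := m) i j h)
  have := congrArg (RingQuot.mkAlgHom K (ExtRel K m q)) this
  simpa [xe, pe] using this

lemma hx_total : ∑ i : ZMod m, xe K m q i = 1 := by
  have := RingQuot.mkAlgHom_rel K (PathRel.total (K := K) (m := m))
  have := congrArg (RingQuot.mkAlgHom K (ExtRel K m q)) this
  simpa [xe, pe] using this

lemma hx_ea (i : ZMod m) : xe K m q i * xa K m q i = xa K m q i := by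
  have := RingQuot.mkAlgHom_rel K (PathRel.asrc (K := K) (m := m) i)
  have := congrArg (RingQuot.mkAlgHom K (ExtRel K m q)) this
  simpa [xe, pe, xa, pa] using this

lemma hx_ae (i : ZMod m) : xa K m q i * xe K m q (i + 1) = xa K m q i := by
  have := RingQuot.mkAlgHom_rel K (PathRel.atgt (K := K) (m := m) i)
  have := congrArg (RingQuot.mkAlgHom K (ExtRel K m q)) this
  simpa [xe, pe, xa, pa] using this

lemma hx_eb (i : ZMod m) : xe K m q (i + 1) * xb K m q i = xb K m q i := by
  have := RingQuot.mkAlgHom_rel K (PathRel.bsrc (K := K) (m := m) i)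
  have := congrArg (RingQuot.mkAlgHom K (ExtRel K m q)) this
  simpa [xe, pe, xb, pb] using this

lemma hx_be (i : ZMod m) : xb K m q i * xe K m q i = xb K m q i := by
  have := RingQuot.mkAlgHom_rel K (PathRel.btgt (K := K) (m := m) i)
  have := congrArg (RingQuot.mkAlgHom K (ExtRel K m q)) this
  simpa [xe, pe, xb, pb] using this

lemma hx_rel (i : ZMod m) : xb K m q i * xa K m q i =
    (-(q (i + 1))⁻¹) • (xa K m q (i + 1) * xb K m q (i + 1)) := by
  have := RingQuot.mkAlgHom_rel K (ExtRel.rel (K := K) (m := m) (q := q) (i + 1))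
  simp only [map_add, map_smul, map_mul, map_zero, add_sub_cancel_right] at this
  exact (eq_neg_of_add_eq_zero_right this).trans (neg_smul _ _).symm

lemma hx_ea_ne (i j : ZMod m) (h : j ≠ i) : xe K m q j * xa K m q i = 0 := by
  rw [← hx_ea, ← mul_assoc, hx_e_orth q j i h, zero_mul]

lemma hx_eb_ne (i j : ZMod m) (h : j ≠ i + 1) : xe K m q j * xb K m q i = 0 := by
  rw [← hx_eb, ← mul_assoc, hx_e_orth q j _ h, zero_mul]

lemma hx_eg (i : ZMod m) (n : ℕ) : xe K m q i * gam K m q i n = gam K m q i n := by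
  cases n with
  | zero => exact hx_e_idem q i
  | succ n => rw [gam, ← mul_assoc, hx_ea]

lemma hx_ge (i : ZMod m) (n : ℕ) : gam K m q i n * xe K m q (i + n) = gam K m q i n := by
  induction n generalizing i with
  | zero => simpa [gam] using hx_e_idem q i
  | succ n ih =>
    have := ih (i + 1)
    rw [gam, mul_assoc, show i + ((n + 1 : ℕ) : ZMod m) = i + 1 + n by push_cast; ring, this]

lemma hx_ga (i : ZMod m) (n : ℕ) : gam K m q i n * xa K m q (i + n) = gam K m q i (n + 1) := by
  induction n generalizing i with
  | zero => simp [gam, hx_ea, hx_ae]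
  | succ n ih =>
    have := ih (i + 1)
    rw [gam, mul_assoc, show i + ((n + 1 : ℕ) : ZMod m) = i + 1 + n by push_cast; ring, this]
    rfl

lemma hx_gg (i : ZMod m) (s t : ℕ) :
    gam K m q i s * gam K m q (i + s) t = gam K m q i (s + t) := by
  induction s generalizing i with
  | zero => simpa [gam] using hx_eg q i t
  | succ n ih =>
    have := ih (i + 1)
    rw [gam, mul_assoc, show i + ((n + 1 : ℕ) : ZMod m) = i + 1 + n by push_cast; ring, this,
      show n + 1 + t = (n + t) + 1 by ring]
    rfl

lemma hx_de (i : ZMod m) (n : ℕ) : del K m q i n * xe K m q i = del K m q i n := by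
  induction n with
  | zero => exact hx_e_idem q i
  | succ n ih => rw [del, mul_assoc, ih]

lemma hx_ed (i : ZMod m) (n : ℕ) : xe K m q (i + n) * del K m q i n = del K m q i n := by
  cases n with
  | zero => simpa [del] using hx_e_idem q i
  | succ n =>
    rw [del, ← mul_assoc, show i + ((n + 1 : ℕ) : ZMod m) = i + n + 1 by push_cast; ring, hx_eb]

lemma hx_dd (i : ZMod m) (s t : ℕ) :
    del K m q (i + t) s * del K m q i t = del K m q i (s + t) := by
  induction s with
  | zero => simpa [del] using hx_ed q i t
  | succ n ih =>
    rw [del, mul_assoc, ih, show n + 1 + t = (n + t) + 1 by ring, del]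
    congr 2
    push_cast; ring

lemma hx_d1 (i : ZMod m) : del K m q i 1 = xb K m q i := by
  simp [del, hx_be]

lemma hx_db (i : ZMod m) (n : ℕ) : del K m q (i + 1) n * xb K m q i = del K m q i (n + 1) := by
  have := hx_dd q i n 1
  rwa [hx_d1, Nat.cast_one] at this

/-- twisting coefficient -/
def lam (i : ZMod m) (t : ℕ) : K := ∏ r ∈ Finset.range t, (-(q (i + r + 1))⁻¹)

lemma lam_zero (i : ZMod m) : lam q i 0 = 1 := by simp [lam]

lemma lam_succ (i : ZMod m) (t : ℕ) : lam q i (t + 1) = lam q i t * (-(q (i + t + 1))⁻¹) := by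
  simp [lam, Finset.prod_range_succ]

lemma lam_succ' (i : ZMod m) (t : ℕ) :
    lam q i (t + 1) = (-(q (i + 1))⁻¹) * lam q (i + 1) t := by
  rw [lam, Finset.prod_range_succ', mul_comm, lam]
  congr 1
  · simp
  · refine Finset.prod_congr rfl fun r _ => ?_
    congr 3; push_cast; ring

lemma lam_ne (hq : ∀ i, q i ≠ 0) (i : ZMod m) (t : ℕ) : lam q i t ≠ 0 := by
  rw [lam, Finset.prod_ne_zero_iff]
  intro r _
  exact neg_ne_zero.mpr (inv_ne_zero (hq _))

lemma hx_bg (i : ZMod m) (s : ℕ) : xb K m q i * gam K m q i s =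
    lam q i s • (gam K m q (i + 1) s * xb K m q (i + s)) := by
  induction s generalizing i with
  | zero => simp [gam, lam_zero, hx_be, hx_eb]
  | succ n ih =>
    have h1 : i + ((n + 1 : ℕ) : ZMod m) = i + 1 + n := by push_cast; ring
    rw [gam, ← mul_assoc, hx_rel, smul_mul_assoc, mul_assoc, ih, mul_smul_comm, smul_smul,
      ← lam_succ', h1, gam, mul_assoc]

lemma hx_da (i : ZMod m) (t : ℕ) : del K m q i t * xa K m q i =
    lam q i t • (xa K m q (i + t) * del K m q (i + 1) t) := by
  induction t with
  | zero => simp [del, lam_zero, hx_ea, hx_ae]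
  | succ n ih =>
    have h1 : i + ((n + 1 : ℕ) : ZMod m) = i + n + 1 := by push_cast; ring
    have h2 : i + 1 + (n : ZMod m) = i + n + 1 := by ring
    rw [del, mul_assoc, ih, mul_smul_comm, ← mul_assoc, hx_rel, smul_mul_assoc, smul_smul,
      ← lam_succ, h1, mul_assoc, del, h2]

/-- twisting coefficient for longer words -/
def kap (i : ZMod m) (t s : ℕ) : K := ∏ k ∈ Finset.range s, lam q (i + k) t

lemma kap_ne (hq : ∀ i, q i ≠ 0) (i : ZMod m) (t s : ℕ) : kap q i t s ≠ 0 := by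
  rw [kap, Finset.prod_ne_zero_iff]
  intro r _
  exact lam_ne q hq _ _

lemma kap_succ' (i : ZMod m) (t s : ℕ) :
    kap q i t (s + 1) = lam q i t * kap q (i + 1) t s := by
  rw [kap, Finset.prod_range_succ', mul_comm, kap]
  congr 1
  · simp
  · refine Finset.prod_congr rfl fun r _ => ?_
    congr 1; push_cast; ring

lemma hx_dg (i : ZMod m) (t s : ℕ) : del K m q i t * gam K m q i s =
    kap q i t s • (gam K m q (i + t) s * del K m q (i + s) t) := by
  induction s generalizing i with
  | zero => simp [gam, kap, hx_de, hx_ed]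
  | succ n ih =>
    have h1 : i + ((n + 1 : ℕ) : ZMod m) = i + 1 + n := by push_cast; ring
    have h2 : i + 1 + (t : ZMod m) = i + t + 1 := by ring
    rw [gam, ← mul_assoc, hx_da, smul_mul_assoc, mul_assoc, ih, mul_smul_comm, smul_smul,
      ← kap_succ', h1, gam, mul_assoc, h2]



/-- coordinate space -/
abbrev VV (K : Type) [Field K] (m : ℕ) : Type := (ZMod m × ℕ × ℕ) →₀ K

/-- basis element -/
def bas (p : ZMod m × ℕ × ℕ) : ExtAlg K m q :=
  gam K m q p.1 p.2.1 * del K m q (p.1 + p.2.1 - p.2.2) p.2.2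

def psi : VV K m →ₗ[K] ExtAlg K m q := Finsupp.linearCombination K (bas q)

lemma psi_single (p : ZMod m × ℕ × ℕ) (c : K) : psi q (Finsupp.single p c) = c • bas q p := by
  simp [psi]

def Lmap : Gen m → (VV K m →ₗ[K] VV K m)
  | Gen.e j => Finsupp.linearCombination K
      (fun p => if p.1 = j then Finsupp.single p 1 else 0)
  | Gen.a j => Finsupp.linearCombination K
      (fun p => if p.1 = j + 1 then Finsupp.single (j, p.2.1 + 1, p.2.2) 1 else 0)
  | Gen.abar j => Finsupp.linearCombination K
      (fun p => if p.1 = j then Finsupp.single (j + 1, p.2.1, p.2.2 + 1) (lam q j p.2.1) else 0)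

def Rmap : Gen m → (VV K m →ₗ[K] VV K m)
  | Gen.e j => Finsupp.linearCombination K
      (fun p => if p.1 + p.2.1 - p.2.2 = j then Finsupp.single p 1 else 0)
  | Gen.a j => Finsupp.linearCombination K
      (fun p => if p.1 + p.2.1 - p.2.2 = j then
        Finsupp.single (p.1, p.2.1 + 1, p.2.2) (lam q j p.2.2) else 0)
  | Gen.abar j => Finsupp.linearCombination K
      (fun p => if p.1 + p.2.1 - p.2.2 = j + 1 then
        Finsupp.single (p.1, p.2.1, p.2.2 + 1) 1 else 0)

def rho0 : FA K m →ₐ[K] Module.End K (VV K m) := FreeAlgebra.lift K (Lmap q)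

lemma rho0_rel {a b : FA K m} (h : PathRel K m a b) : rho0 q a = rho0 q b := by
  cases h with
  | orth i j hij =>
    refine Finsupp.lhom_ext' fun p => LinearMap.ext_ring ?_
    by_cases h : p.1 = j
    · have : p.1 ≠ i := fun h' => hij (h'.symm.trans h)
      simp [rho0, Ee, Lmap, h, this, hij.symm]
    · simp [rho0, Ee, Lmap, h]
  | idem i =>
    refine Finsupp.lhom_ext' fun p => LinearMap.ext_ring ?_
    by_cases h : p.1 = i
    · simp [rho0, Ee, Lmap, h]
    · simp [rho0, Ee, Lmap, h]
  | total =>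
    refine Finsupp.lhom_ext' fun p => LinearMap.ext_ring ?_
    simp [rho0, Ee, Lmap]
  | asrc i =>
    refine Finsupp.lhom_ext' fun p => LinearMap.ext_ring ?_
    by_cases h : p.1 = i + 1
    · simp [rho0, Ee, Aa, Lmap, h]
    · simp [rho0, Ee, Aa, Lmap, h]
  | atgt i =>
    refine Finsupp.lhom_ext' fun p => LinearMap.ext_ring ?_
    by_cases h : p.1 = i + 1
    · simp [rho0, Ee, Aa, Lmap, h]
    · simp [rho0, Ee, Aa, Lmap, h]
  | bsrc i =>
    refine Finsupp.lhom_ext' fun p => LinearMap.ext_ring ?_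
    by_cases h : p.1 = i
    · simp [rho0, Ee, Bb, Lmap, h]
    · simp [rho0, Ee, Bb, Lmap, h]
  | btgt i =>
    refine Finsupp.lhom_ext' fun p => LinearMap.ext_ring ?_
    by_cases h : p.1 = i
    · simp [rho0, Ee, Bb, Lmap, h]
    · simp [rho0, Ee, Bb, Lmap, h]

def rho1 : PathAlg K m →ₐ[K] Module.End K (VV K m) :=
  RingQuot.liftAlgHom K ⟨rho0 q, fun _ _ h => rho0_rel q h⟩

lemma rho1_rel {a b : PathAlg K m} (h : ExtRel K m q a b) : rho1 q a = rho1 q b := by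
  cases h with
  | rel i =>
    refine Finsupp.lhom_ext' fun p => LinearMap.ext_ring ?_
    obtain ⟨j, s, t⟩ := p
    by_cases h : j = i
    · subst h
      simp [rho1, pa, pb, rho0, Aa, Bb, Lmap, lam_succ', ← add_smul]
    · simp [rho1, pa, pb, rho0, Aa, Bb, Lmap, h]

def rho : ExtAlg K m q →ₐ[K] Module.End K (VV K m) :=
  RingQuot.liftAlgHom K ⟨rho1 q, fun _ _ h => rho1_rel q h⟩

def Phi : FA K m →ₐ[K] ExtAlg K m q :=
  (RingQuot.mkAlgHom K (ExtRel K m q)).comp (RingQuot.mkAlgHom K (PathRel K m))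

lemma Phi_surj : Function.Surjective (Phi q) :=
  (RingQuot.mkAlgHom_surjective K _).comp (RingQuot.mkAlgHom_surjective K _)

/-- images of the generators -/
def xg (g : Gen m) : ExtAlg K m q := Phi q (FreeAlgebra.ι K g)

lemma rho_xg (g : Gen m) : rho q (xg q g) = Lmap q g := by
  simp [rho, xg, Phi, rho1, rho0]

lemma ext_induct {P : ExtAlg K m q → Prop} (h1 : ∀ c, P (algebraMap K _ c))
    (hg : ∀ g, P (xg q g)) (hm : ∀ a b, P a → P b → P (a * b))
    (ha : ∀ a b, P a → P b → P (a + b)) (z) : P z := by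
  obtain ⟨y, rfl⟩ := Phi_surj q z
  induction y using FreeAlgebra.induction with
  | grade0 r => simpa using h1 r
  | grade1 x => exact hg x
  | mul a b h h' => rw [map_mul]; exact hm _ _ h h'
  | add a b h h' => rw [map_add]; exact ha _ _ h h'

lemma psi_L (g : Gen m) (v : VV K m) : psi q (Lmap q g v) = xg q g * psi q v := by
  suffices psi q ∘ₗ Lmap q g = (LinearMap.mulLeft K (xg q g)) ∘ₗ psi q from
    LinearMap.congr_fun this v
  refine Finsupp.lhom_ext' fun p => LinearMap.ext_ring ?_
  obtain ⟨j, s, t⟩ := p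
  cases g with
  | e i =>
    change _ = xe K m q i * _
    by_cases h : j = i
    · subst h
      simp [Lmap, psi, bas, ← mul_assoc, hx_eg]
    · have h' : i ≠ j := fun h' => h h'.symm
      simp [Lmap, h, psi, bas]
      rw [← hx_eg q j s]
      simp [← mul_assoc, hx_e_orth q _ _ h']
  | a i =>
    change _ = xa K m q i * _
    by_cases h : j = i + 1
    · subst h
      have : i + (↑s + 1) - (t : ZMod m) = i + 1 + s - t := by ring
      simp [Lmap, psi, bas, gam, mul_assoc, this]
    · have h' : i + 1 ≠ j := fun h' => h h'.symm
      simp [Lmap, h, psi, bas]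
      rw [← hx_eg q j s, ← hx_ae q i]
      simp [← mul_assoc, mul_assoc _ (xe K m q (i+1)) (xe K m q j), hx_e_orth q _ _ h']
  | abar i =>
    change _ = xb K m q i * _
    by_cases h : j = i
    · subst h
      have : j + 1 + s - (↑t + 1) = j + (s : ZMod m) - t := by ring
      have h2 : j + (s : ZMod m) - t + t = j + s := by ring
      simp [Lmap, psi, bas, ← mul_assoc, hx_bg, this, del, h2]
    · have h' : i ≠ j := fun h' => h h'.symm
      simp [Lmap, h, psi, bas]
      rw [← hx_eg q j s, ← hx_be q i]
      simp [← mul_assoc, mul_assoc _ (xe K m q i) (xe K m q j), hx_e_orth q _ _ h']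

lemma psi_R (g : Gen m) (v : VV K m) : psi q (Rmap q g v) = psi q v * xg q g := by
  suffices psi q ∘ₗ Rmap q g = (LinearMap.mulRight K (xg q g)) ∘ₗ psi q from
    LinearMap.congr_fun this v
  refine Finsupp.lhom_ext' fun p => LinearMap.ext_ring ?_
  obtain ⟨j, s, t⟩ := p
  have hjs : j + (s : ZMod m) = (j + s - t) + t := by ring
  cases g with
  | e i =>
    change _ = _ * xe K m q i
    by_cases h : j + s - t = i
    · simp [Lmap, psi, bas, Rmap, h, mul_assoc, hx_de]
    · simp [Rmap, h, psi, bas]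
      rw [← hx_de q (j + s - t) t]
      simp [mul_assoc, hx_e_orth q _ _ h]
  | a i =>
    change _ = _ * xa K m q i
    by_cases h : j + s - t = i
    · have h1 : j + (↑s + 1) - (t : ZMod m) = i + 1 := by rw [← h]; ring
      rw [h] at hjs
      simp [psi, bas, Rmap, h, mul_assoc, hx_da, h1]
      rw [← hx_ga, ← hjs, mul_assoc]
    · simp [Rmap, h, psi, bas]
      rw [← hx_de q (j + s - t) t, ← hx_ea q i]
      simp [← mul_assoc, mul_assoc _ (xe K m q (j + s - t)) (xe K m q i), hx_e_orth q _ _ h]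
  | abar i =>
    change _ = _ * xb K m q i
    by_cases h : j + s - t = i + 1
    · have h1 : j + s - (t + 1 : ZMod m) = i := by
        rw [← sub_sub, h]; ring
      simp [psi, bas, Rmap, h, mul_assoc, hx_db, h1]
    · simp [Rmap, h, psi, bas]
      rw [← hx_de q (j + s - t) t, ← hx_eb q i]
      simp [← mul_assoc, mul_assoc _ (xe K m q (j + s - t)) (xe K m q (i + 1)),
        hx_e_orth q _ _ h]

lemma psi_rho (z : ExtAlg K m q) : ∀ v, psi q (rho q z v) = z * psi q v := by
  induction z using ext_induct q with
  | h1 c => intro v; simp [Algebra.algebraMap_eq_smul_one]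
  | hg g => intro v; rw [rho_xg, psi_L]
  | hm a b h h' => intro v; rw [map_mul, Module.End.mul_apply, h, h', mul_assoc]
  | ha a b h h' => intro v; rw [map_add, LinearMap.add_apply, map_add, h, h', add_mul]

def v0 : VV K m := ∑ i : ZMod m, Finsupp.single (i, 0, 0) 1

def coord : ExtAlg K m q →ₗ[K] VV K m where
  toFun z := rho q z v0
  map_add' a b := by simp
  map_smul' c a := by simp

lemma psi_coord (z : ExtAlg K m q) : psi q (coord q z) = z := by
  change psi q (rho q z v0) = z
  rw [psi_rho]
  have : psi q (v0 : VV K m) = 1 := by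
    simp [v0, psi, bas, gam, del, hx_e_idem, hx_total]
  rw [this, mul_one]


lemma rho_e (i : ZMod m) : rho q (xe K m q i) = Lmap q (Gen.e i) := rho_xg q (Gen.e i)
lemma rho_a (i : ZMod m) : rho q (xa K m q i) = Lmap q (Gen.a i) := rho_xg q (Gen.a i)
lemma rho_b (i : ZMod m) : rho q (xb K m q i) = Lmap q (Gen.abar i) := rho_xg q (Gen.abar i)

lemma rho_del (j : ZMod m) (t : ℕ) :
    rho q (del K m q j t) v0 = Finsupp.single (j + t, 0, t) 1 := by
  induction t with
  | zero => simp [del, rho_e, Lmap, v0]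
  | succ n ih =>
    rw [del, map_mul, Module.End.mul_apply, ih]
    simp [rho_b, Lmap, lam_zero, add_assoc]

lemma rho_gam (i : ZMod m) (s t r : ℕ) :
    rho q (gam K m q i s) (Finsupp.single (i + s, r, t) 1) = Finsupp.single (i, r + s, t) 1 := by
  induction s generalizing i with
  | zero => simp [gam, rho_e, Lmap]
  | succ n ih =>
    have h1 : i + ((n + 1 : ℕ) : ZMod m) = i + 1 + n := by push_cast; ring
    rw [gam, map_mul, Module.End.mul_apply, h1, ih]
    simp [rho_a, Lmap, add_assoc]

lemma coord_bas (p : ZMod m × ℕ × ℕ) : coord q (bas q p) = Finsupp.single p 1 := by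
  obtain ⟨i, s, t⟩ := p
  change rho q (bas q _) v0 = _
  rw [bas, map_mul, Module.End.mul_apply, rho_del]
  have := rho_gam q i s t 0
  simpa using this

lemma coord_psi (v : VV K m) : coord q (psi q v) = v := by
  suffices coord q ∘ₗ psi q = LinearMap.id from LinearMap.congr_fun this v
  refine Finsupp.lhom_ext' fun p => LinearMap.ext_ring ?_
  simp [psi_single, coord_bas]

lemma coord_L (g : Gen m) (z : ExtAlg K m q) : coord q (xg q g * z) = Lmap q g (coord q z) := by
  conv_lhs => rw [← psi_coord q z, ← psi_L, coord_psi]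

lemma coord_R (g : Gen m) (z : ExtAlg K m q) : coord q (z * xg q g) = Rmap q g (coord q z) := by
  conv_lhs => rw [← psi_coord q z, ← psi_R, coord_psi]

lemma ev_lin {F : VV K m →ₗ[K] VV K m} {c : K} {a b : ZMod m × ℕ × ℕ}
    (h : ∀ p, F (Finsupp.single p 1) a = if p = b then c else 0) (v : VV K m) :
    F v a = c * v b := by
  have : Finsupp.lapply a ∘ₗ F = c • Finsupp.lapply b := by
    refine Finsupp.lhom_ext' fun p => LinearMap.ext_ring ?_
    simp only [LinearMap.comp_apply, Finsupp.lsingle_apply, Finsupp.lapply_apply, h,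
      LinearMap.smul_apply, Finsupp.single_apply, smul_eq_mul]
    split_ifs <;> simp
  exact LinearMap.congr_fun this v

lemma ev_Le (i : ZMod m) (s t : ℕ) (v : VV K m) :
    Lmap q (Gen.e i) v (i, s, t) = v (i, s, t) := by
  rw [ev_lin (c := 1) (b := (i, s, t)) _ v, one_mul]
  rintro ⟨j, s', t'⟩
  by_cases h : j = i <;> simp [Lmap, h, Finsupp.single_apply]

lemma ev_Le_ne (i j : ZMod m) (s t : ℕ) (v : VV K m) (hj : j ≠ i) :
    Lmap q (Gen.e i) v (j, s, t) = 0 := by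
  rw [ev_lin (c := 0) (b := (i, s, t)) _ v, zero_mul]
  rintro ⟨j', s', t'⟩
  by_cases h : j' = i <;> simp [Lmap, h, Finsupp.single_apply]
  intro h'; exact absurd h'.symm hj

lemma ev_Re (i j : ZMod m) (s t : ℕ) (v : VV K m) (h : j + s - t = i) :
    Rmap q (Gen.e i) v (j, s, t) = v (j, s, t) := by
  rw [ev_lin (c := 1) (b := (j, s, t)) _ v, one_mul]
  rintro ⟨j', s', t'⟩
  by_cases h' : j' + s' - t' = i
  · simp [Rmap, h', Finsupp.single_apply]
  · simp [Rmap, h', Finsupp.single_apply]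
    rintro rfl rfl rfl
    exact h' h

lemma ev_La (i : ZMod m) (s t : ℕ) (v : VV K m) :
    Lmap q (Gen.a i) v (i, s + 1, t) = v (i + 1, s, t) := by
  rw [ev_lin (c := 1) (b := (i + 1, s, t)) _ v, one_mul]
  rintro ⟨j, s', t'⟩
  by_cases h : j = i + 1 <;> simp [Lmap, h, Finsupp.single_apply]

lemma ev_Ra (i : ZMod m) (s t : ℕ) (v : VV K m) (h : (s : ZMod m) = t) :
    Rmap q (Gen.a i) v (i, s + 1, t) = lam q i t * v (i, s, t) := by
  rw [ev_lin (c := lam q i t) (b := (i, s, t)) _ v]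
  rintro ⟨j, s', t'⟩
  by_cases h' : j + s' - t' = i
  · simp [Rmap, h', Finsupp.single_apply]
    split_ifs with h1
    · rw [h1.2.2]
    · rfl
  · simp [Rmap, h', Finsupp.single_apply]
    rintro rfl rfl rfl
    exact absurd (by rw [h]; ring) h'

lemma ev_Lb (i : ZMod m) (s t : ℕ) (v : VV K m) :
    Lmap q (Gen.abar i) v (i + 1, s, t + 1) = lam q i s * v (i, s, t) := by
  rw [ev_lin (c := lam q i s) (b := (i, s, t)) _ v]
  rintro ⟨j, s', t'⟩
  by_cases h : j = i
  · simp [Lmap, h, Finsupp.single_apply]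
    split_ifs with h1
    · rw [h1.1]
    · rfl
  · simp [Lmap, h, Finsupp.single_apply]

lemma ev_Rb (i : ZMod m) (s t : ℕ) (v : VV K m) (h : (s : ZMod m) = t) :
    Rmap q (Gen.abar i) v (i + 1, s, t + 1) = v (i + 1, s, t) := by
  rw [ev_lin (c := 1) (b := (i + 1, s, t)) _ v, one_mul]
  rintro ⟨j, s', t'⟩
  by_cases h' : j + s' - t' = i + 1
  · simp [Rmap, h', Finsupp.single_apply]
  · simp [Rmap, h', Finsupp.single_apply]
    rintro rfl rfl rfl
    exact absurd (by rw [h]; ring) h'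


lemma supp_of_comm_e (z : ExtAlg K m q)
    (hz : ∀ i, z * xe K m q i = xe K m q i * z) (i : ZMod m) (s t : ℕ)
    (h : coord q z (i, s, t) ≠ 0) : (s : ZMod m) = t := by
  by_contra hst
  have h1 := coord_R q (Gen.e (i + s - t)) z
  have h2 := coord_L q (Gen.e (i + s - t)) z
  have h3 : z * xg q (Gen.e (i + s - t)) = xg q (Gen.e (i + s - t)) * z := hz _
  rw [h3, h2] at h1
  have h4 := DFunLike.congr_fun h1 (i, s, t)
  rw [ev_Re q _ _ _ _ _ rfl, ev_Le_ne] at h4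
  · exact h h4.symm
  · intro h5
    apply hst
    have : (s : ZMod m) - t = 0 := by linear_combination -h5
    exact sub_eq_zero.mp this

lemma center_e {z : ExtAlg K m q} (hz : z ∈ Subalgebra.center K (ExtAlg K m q)) (g) :
    z * g = g * z := ((Subalgebra.mem_center_iff.mp hz) g).symm

lemma coord_rec_a {z : ExtAlg K m q} (hz : z ∈ Subalgebra.center K (ExtAlg K m q))
    (i : ZMod m) (s t : ℕ) (h : (s : ZMod m) = t) :
    coord q z (i + 1, s, t) = lam q i t * coord q z (i, s, t) := by
  have h1 := coord_R q (Gen.a i) z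
  rw [center_e q hz, coord_L] at h1
  rw [← ev_La q, ← ev_Ra q _ _ _ _ h, h1]

lemma coord_rec_b {z : ExtAlg K m q} (hz : z ∈ Subalgebra.center K (ExtAlg K m q))
    (i : ZMod m) (s t : ℕ) (h : (s : ZMod m) = t) :
    coord q z (i + 1, s, t) = lam q i s * coord q z (i, s, t) := by
  have h1 := coord_R q (Gen.abar i) z
  rw [center_e q hz, coord_L] at h1
  rw [← ev_Rb q _ _ _ _ h, ← ev_Lb q, h1]

lemma zmod_induct {P : ZMod m → Prop} (h0 : P 0) (hs : ∀ i, P i → P (i + 1)) (i : ZMod m) :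
    P i := by
  have : ∀ n : ℕ, P (n : ZMod m) := by
    intro n
    induction n with
    | zero => simpa using h0
    | succ n ih => push_cast; exact hs _ ih
  have h := this i.val
  rwa [ZMod.natCast_zmod_val] at h

lemma center_eq_zero {z : ExtAlg K m q} (hz : z ∈ Subalgebra.center K (ExtAlg K m q))
    (h0 : xe K m q 0 * z = 0) : z = 0 := by
  have hc : coord q z = 0 := by
    ext ⟨i, s, t⟩
    by_contra hne
    have hst := supp_of_comm_e q z (fun i => center_e q hz _) i s t hne
    apply hne
    revert hne
    intro _
    have : ∀ i, coord q z (i, s, t) = 0 := by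
      intro i
      induction i using zmod_induct with
      | h0 =>
        have h1 := coord_L q (Gen.e 0) z
        rw [show xg q (Gen.e 0) * z = 0 from h0, map_zero] at h1
        rw [← ev_Le q, ← h1]; rfl
      | hs i ih => rw [coord_rec_a q hz _ _ _ hst, ih, mul_zero]
    exact this i
  rw [← psi_coord q z, hc, map_zero]

lemma mem_center_of (z : ExtAlg K m q) (h : ∀ g, z * xg q g = xg q g * z) :
    z ∈ Subalgebra.center K (ExtAlg K m q) := by
  rw [Subalgebra.mem_center_iff]
  intro b
  induction b using ext_induct q with
  | h1 c => exact Algebra.commutes c z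
  | hg g => exact (h g).symm
  | hm a b ha hb => rw [mul_assoc, hb, ← mul_assoc, ha, mul_assoc]
  | ha a b ha hb => rw [add_mul, mul_add, ha, hb]

/-- candidate central element -/
def cand (c : ZMod m → K) (s t : ℕ) : ExtAlg K m q :=
  ∑ i : ZMod m, c i • (gam K m q i s * del K m q i t)

lemma cand_center (c : ZMod m → K) (s t : ℕ) (hst : (s : ZMod m) = t)
    (h1 : ∀ i, c (i + 1) = lam q i t * c i) (h2 : ∀ i, c (i + 1) = lam q i s * c i) :
    cand q c s t ∈ Subalgebra.center K (ExtAlg K m q) := by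
  have key : ∀ i, xe K m q i * cand q c s t = c i • (gam K m q i s * del K m q i t) := by
    intro i
    rw [cand, Finset.mul_sum, Finset.sum_eq_single i]
    · rw [mul_smul_comm, ← mul_assoc, hx_eg]
    · intro j _ hj
      rw [← hx_eg q j s, mul_smul_comm, ← mul_assoc, ← mul_assoc, hx_e_orth q i j hj.symm,
        zero_mul, zero_mul, smul_zero]
    · simp
  have key' : ∀ i, cand q c s t * xe K m q i = c i • (gam K m q i s * del K m q i t) := by
    intro i
    rw [cand, Finset.sum_mul, Finset.sum_eq_single i]
    · rw [smul_mul_assoc, mul_assoc, hx_de]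
    · intro j _ hj
      rw [← hx_de q j t, smul_mul_assoc, mul_assoc, mul_assoc, hx_e_orth q j i hj,
        mul_zero, mul_zero, smul_zero]
    · simp
  apply mem_center_of
  intro g
  cases g with
  | e i =>
    change _ * xe K m q i = xe K m q i * _
    rw [key, key']
  | a i =>
    change _ * xa K m q i = xa K m q i * _
    rw [← hx_ae q i, mul_assoc, key (i + 1), hx_ae]
    conv_lhs => rw [← hx_ea q i, ← mul_assoc, key']
    rw [smul_mul_assoc, mul_assoc, hx_da, mul_smul_comm, smul_smul, ← mul_assoc, ← hst, hx_ga,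
      mul_smul_comm, h1, gam, mul_assoc, mul_comm (c i)]
  | abar i =>
    change _ * xb K m q i = xb K m q i * _
    rw [← hx_be q i, mul_assoc, key i, hx_be]
    conv_lhs => rw [← hx_eb q i, ← mul_assoc, key']
    rw [smul_mul_assoc, mul_assoc, hx_db, h2, mul_smul_comm, ← mul_assoc, hx_bg, smul_mul_assoc,
      smul_smul, mul_comm (c i), mul_assoc, hst, del]

/-- leading part at the vertex `0` -/
def Lead (z : ExtAlg K m q) (s t : ℕ) (u : K) : Prop :=
  xe K m q 0 * z = u • (gam K m q 0 s * del K m q 0 t)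

lemma cand_lead (c : ZMod m → K) (s t : ℕ) : Lead q (cand q c s t) s t (c 0) := by
  rw [Lead, cand, Finset.mul_sum, Finset.sum_eq_single 0]
  · rw [mul_smul_comm, ← mul_assoc, hx_eg]
  · intro j _ hj
    rw [← hx_eg q j s, mul_smul_comm, ← mul_assoc, ← mul_assoc, hx_e_orth q 0 j hj.symm,
      zero_mul, zero_mul, smul_zero]
  · simp

lemma lead_mul {z z' : ExtAlg K m q} {s t s' t' : ℕ} {u u' : K}
    (hz : z ∈ Subalgebra.center K (ExtAlg K m q)) (h : Lead q z s t u) (h' : Lead q z' s' t' u')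
    (hst : (s : ZMod m) = t) (hst' : (s' : ZMod m) = t') :
    Lead q (z * z') (s + s') (t + t') (u * u' * kap q 0 t s') := by
  rw [Lead] at *
  have e1 : xe K m q 0 * (z * z') = (xe K m q 0 * z) * (xe K m q 0 * z') := by
    rw [mul_assoc, ← mul_assoc z, center_e q hz (xe K m q 0), mul_assoc (xe K m q 0) z z',
      ← mul_assoc (xe K m q 0) (xe K m q 0), hx_e_idem]
  have e2 := hx_gg q 0 s s'
  have e3 := hx_dd q 0 t t'
  rw [e1, h, h', smul_mul_smul_comm, mul_assoc, ← mul_assoc (del K m q 0 t), hx_dg,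
    smul_mul_assoc, mul_smul_comm, smul_smul, ← e2, ← e3, hst, hst']
  simp only [mul_assoc]

lemma lead_one : Lead q (1 : ExtAlg K m q) 0 0 1 := by
  simp [Lead, gam, del, hx_e_idem]

lemma lead_pow (hq : ∀ i, q i ≠ 0) {z : ExtAlg K m q} {s t : ℕ} {u : K}
    (hz : z ∈ Subalgebra.center K (ExtAlg K m q)) (h : Lead q z s t u) (hu : u ≠ 0)
    (hst : (s : ZMod m) = t) (n : ℕ) : ∃ u', u' ≠ 0 ∧ Lead q (z ^ n) (n * s) (n * t) u' := by
  induction n with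
  | zero => exact ⟨1, one_ne_zero, by simpa using lead_one q⟩
  | succ n ih =>
    obtain ⟨u', hu', h'⟩ := ih
    refine ⟨u * u' * kap q 0 t (n * s), ?_, ?_⟩
    rotate_left
    · rw [pow_succ', show (n + 1) * s = s + n * s by ring, show (n + 1) * t = t + n * t by ring]
      exact lead_mul q hz h h' hst (by push_cast; rw [hst])
    · exact mul_ne_zero (mul_ne_zero hu hu') (kap_ne q hq _ _ _)

lemma lead_pow_d {z : ExtAlg K m q} {s : ℕ}
    (hz : z ∈ Subalgebra.center K (ExtAlg K m q)) (h : Lead q z s s 1) (n : ℕ) :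
    Lead q (z ^ n) (n * s) (n * s) (∏ l ∈ Finset.range n, kap q 0 s (l * s)) := by
  induction n with
  | zero => simpa using lead_one q
  | succ n ih =>
    have := lead_mul q hz h ih rfl rfl
    rw [pow_succ', show (n + 1) * s = s + n * s by ring, Finset.prod_range_succ]
    simpa using this



lemma bas_eq (i j : ZMod m) (s t : ℕ) (h : i + s = j + t) :
    gam K m q i s * del K m q j t = bas q (i, s, t) := by
  simp only [bas]; rw [h]; congr 2; ring

lemma homog_coord {n : ℕ} {z : ExtAlg K m q} (hz : Homog K m q n z) (i : ZMod m) (s t : ℕ)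
    (h : coord q z (i, s, t) ≠ 0) : s + t = n := by
  by_contra hne
  apply h
  rw [Homog] at hz
  induction hz using Submodule.span_induction with
  | mem x hx =>
    obtain ⟨i', j', s', t', hs, rfl⟩ := hx
    by_cases hh : i' + s' = j' + t'
    · rw [bas_eq q _ _ _ _ hh, coord_bas, Finsupp.single_apply, if_neg]
      rintro h
      simp only [Prod.mk.injEq] at h
      omega
    · rw [← hx_ge, ← hx_ed q j', mul_assoc, ← mul_assoc (xe K m q _), hx_e_orth q _ _ hh,
        zero_mul, mul_zero, map_zero]
      rfl
  | zero => simp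
  | add x y _ _ hx hy =>
    by_cases h1 : coord q x (i, s, t) = 0
    · by_cases h2 : coord q y (i, s, t) = 0
      · simp [h1, h2]
      · exact absurd (hy h2) h2
    · exact absurd (hx h1) h1
  | smul a x _ hx =>
    by_cases h1 : coord q x (i, s, t) = 0
    · simp [h1]
    · exact absurd (hx h1) h1

lemma homog_xe (i : ZMod m) : Homog K m q 0 (xe K m q i) :=
  Submodule.subset_span ⟨i, i, 0, 0, rfl, (hx_e_idem q i).symm⟩

lemma homog_xa (i : ZMod m) : Homog K m q 1 (xa K m q i) :=
  Submodule.subset_span ⟨i, i + 1, 1, 0, rfl, by simp [gam, del, mul_assoc, hx_e_idem, hx_ae]⟩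

lemma homog_xb (i : ZMod m) : Homog K m q 1 (xb K m q i) :=
  Submodule.subset_span ⟨i + 1, i, 0, 1, rfl, by simp [gam, hx_d1, hx_eb]⟩

lemma homog_cand (c : ZMod m → K) (s t : ℕ) : Homog K m q (s + t) (cand q c s t) :=
  Submodule.sum_mem _ fun i _ => Submodule.smul_mem _ _
    (Submodule.subset_span ⟨i, i, s, t, rfl, rfl⟩)

lemma neg_one_pow_eq (hcase : Even m ∨ ringChar K = 2) {n : ℕ} (h : Even m → Even n) :
    (-1 : K) ^ n = 1 := by
  rcases hcase with h1 | h1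
  · exact (h h1).neg_one_pow
  · have : CharP K 2 := ringChar.of_eq h1
    rw [CharTwo.neg_eq, one_pow]

lemma zgr_le (hcase : Even m ∨ ringChar K = 2) :
    ZGr K m q ≤ Subalgebra.center K (ExtAlg K m q) := by
  refine Algebra.adjoin_le ?_
  rintro z ⟨n, hn, hz⟩
  by_cases hz0 : coord q z = 0
  · have : z = 0 := by rw [← psi_coord q z, hz0, map_zero]
    rw [this]; exact zero_mem _
  have he : ∀ i, z * xe K m q i = xe K m q i * z := by
    intro i
    have := hz 0 _ (homog_xe q i)
    simpa using this
  have hsign : (-1 : K) ^ n = 1 := by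
    refine neg_one_pow_eq hcase fun hm => ?_
    obtain ⟨⟨i, s, t⟩, hp⟩ := Finsupp.ne_iff.mp hz0
    have h1 := supp_of_comm_e q z he i s t hp
    have h2 := homog_coord q hn i s t hp
    rw [ZMod.natCast_eq_natCast_iff] at h1
    have h3 : s ≡ t [MOD 2] := h1.of_dvd hm.two_dvd
    rw [Nat.even_iff, ← h2]
    unfold Nat.ModEq at h3
    omega
  apply mem_center_of
  intro g
  cases g with
  | e i => exact he i
  | a i =>
    have := hz 1 _ (homog_xa q i)
    rw [mul_one, hsign, one_smul] at this
    exact this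
  | abar i =>
    have := hz 1 _ (homog_xb q i)
    rw [mul_one, hsign, one_smul] at this
    exact this

lemma cand_zgr (hcase : Even m ∨ ringChar K = 2) (c : ZMod m → K) (s t : ℕ)
    (h : cand q c s t ∈ Subalgebra.center K (ExtAlg K m q)) (he : Even m → Even (s + t)) :
    cand q c s t ∈ ZGr K m q := by
  refine Algebra.subset_adjoin ⟨s + t, homog_cand q c s t, fun n' g _ => ?_⟩
  rw [pow_mul, neg_one_pow_eq hcase he, one_pow, one_smul]
  exact center_e q h g



lemma prod_range_zmod (f : ZMod m → K) :
    ∏ r ∈ Finset.range m, f (r : ZMod m) = ∏ i : ZMod m, f i := by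
  refine Finset.prod_bij (fun r _ => (r : ZMod m)) (fun _ _ => Finset.mem_univ _) ?_ ?_
    (fun _ _ => rfl)
  · intro a ha b hb hab
    rw [Finset.mem_range] at ha hb
    have := congrArg ZMod.val hab
    rwa [ZMod.val_cast_of_lt ha, ZMod.val_cast_of_lt hb] at this
  · intro b _
    exact ⟨b.val, Finset.mem_range.mpr (ZMod.val_lt b), ZMod.natCast_zmod_val b⟩

lemma prod_neg_inv (hm1 : (-1 : K) ^ m = 1) (j : ZMod m) :
    ∏ i : ZMod m, (-(q (i + j))⁻¹) = (∏ i, q i)⁻¹ := by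
  rw [Finset.prod_neg, Finset.card_univ, ZMod.card, hm1, one_mul, Finset.prod_inv_distrib]
  congr 1
  exact Fintype.prod_equiv (Equiv.addRight j) _ _ (fun _ => rfl)

lemma lam_m (hm1 : (-1 : K) ^ m = 1) (i : ZMod m) : lam q i m = (∏ i, q i)⁻¹ := by
  rw [lam, prod_range_zmod (fun r => -(q (i + r + 1))⁻¹), ← prod_neg_inv q hm1 (i + 1)]
  refine Finset.prod_congr rfl fun r _ => ?_
  congr 3; ring

lemma lam_add (i : ZMod m) (t s : ℕ) : lam q i (t + s) = lam q i t * lam q (i + t) s := by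
  rw [lam, Finset.prod_range_add, lam, lam]
  congr 1
  refine Finset.prod_congr rfl fun r _ => ?_
  congr 3; push_cast; ring

lemma lam_mul (hm1 : (-1 : K) ^ m = 1) (i : ZMod m) (j : ℕ) :
    lam q i (m * j) = ((∏ i, q i)⁻¹) ^ j := by
  induction j with
  | zero => simp [lam]
  | succ n ih => rw [mul_add, mul_one, lam_add, ih, lam_m q hm1, pow_succ]

lemma prod_lam (hm1 : (-1 : K) ^ m = 1) (t : ℕ) :
    ∏ i : ZMod m, lam q i t = ((∏ i, q i)⁻¹) ^ t := by
  simp only [lam]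
  rw [Finset.prod_comm, ← Finset.card_range t, ← Finset.prod_const, Finset.card_range]
  refine Finset.prod_congr rfl fun r _ => ?_
  rw [← prod_neg_inv q hm1 (r + 1)]
  refine Finset.prod_congr rfl fun r _ => ?_
  congr 3; ring

lemma admissible_aux (hm1 : (-1 : K) ^ m = 1) (hq : ∀ i, q i ≠ 0) {d : ℕ}
    (hζ : IsPrimitiveRoot (∏ i : ZMod m, q i) d) {s t : ℕ} {i : ZMod m}
    (h : lam q i t = lam q i s) (hst : (s : ZMod m) = t) (hts : t ≤ s) :
    ∃ j, s = t + d * m * j := by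
  have h1 : m ∣ s - t := by
    rw [← Nat.modEq_iff_dvd' hts]
    exact ((ZMod.natCast_eq_natCast_iff _ _ _).mp hst).symm
  obtain ⟨j, hj⟩ := h1
  have hs : s = t + m * j := by omega
  rw [hs, lam_add, lam_mul q hm1] at h
  have h2 : ((∏ i, q i)⁻¹) ^ j = 1 := by
    have := lam_ne q hq i t
    exact (mul_eq_left₀ this).mp h.symm
  rw [hζ.inv.pow_eq_one_iff_dvd] at h2
  obtain ⟨l, rfl⟩ := h2
  exact ⟨l, by rw [hs]; ring⟩

lemma admissible (hm1 : (-1 : K) ^ m = 1) (hq : ∀ i, q i ≠ 0) {d : ℕ}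
    (hζ : IsPrimitiveRoot (∏ i : ZMod m, q i) d) {z : ExtAlg K m q}
    (hz : z ∈ Subalgebra.center K (ExtAlg K m q)) {s t : ℕ} (i : ZMod m)
    (h : coord q z (i, s, t) ≠ 0) :
    ∃ k j, (s = k * d + j * (d * m) ∧ t = k * d) ∨ (s = k * d ∧ t = k * d + j * (d * m)) := by
  have hst := supp_of_comm_e q z (fun i => center_e q hz _) i s t h
  have hne : ∀ j, coord q z (j, s, t) ≠ 0 := by
    intro j
    have h' : ∀ j, coord q z (i + j, s, t) ≠ 0 := by
      intro j
      induction j using zmod_induct with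
      | h0 => simpa using h
      | hs j ih =>
        rw [← add_assoc, coord_rec_a q hz _ _ _ hst]
        exact mul_ne_zero (lam_ne q hq _ _) ih
    simpa using h' (j - i)
  have hl : lam q i t = lam q i s := by
    have h1 := coord_rec_a q hz i s t hst
    rw [coord_rec_b q hz i s t hst] at h1
    exact (mul_right_cancel₀ (hne i) h1).symm
  have hp : ((∏ i, q i)⁻¹) ^ t = 1 := by
    rw [← prod_lam q hm1]
    have h1 : ∏ j : ZMod m, coord q z (j + 1, s, t) = ∏ j : ZMod m, coord q z (j, s, t) :=
      Fintype.prod_equiv (Equiv.addRight 1) _ _ (fun _ => rfl)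
    rw [Finset.prod_congr rfl (fun j _ => coord_rec_a q hz j s t hst), Finset.prod_mul_distrib]
      at h1
    have h2 : ∏ j : ZMod m, coord q z (j, s, t) ≠ 0 :=
      Finset.prod_ne_zero_iff.mpr fun j _ => hne j
    exact (mul_eq_right₀ h2).mp h1
  rw [hζ.inv.pow_eq_one_iff_dvd] at hp
  obtain ⟨k, hk⟩ := hp
  rcases le_total t s with hts | hts
  · obtain ⟨j, hj⟩ := admissible_aux q hm1 hq hζ hl hst hts
    exact ⟨k, j, Or.inl ⟨by rw [hj, hk]; ring, by rw [hk]; ring⟩⟩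
  · obtain ⟨j, hj⟩ := admissible_aux q hm1 hq hζ hl.symm hst.symm hts
    by_cases hd : d = 0
    · subst hd
      simp at hj hk
      exact ⟨0, 0, Or.inl ⟨by omega, by omega⟩⟩
    · have hds : d ∣ s := by
        have : d ∣ s + d * m * j := by rw [← hj, hk]; exact dvd_mul_right _ _
        exact (Nat.dvd_add_left (by rw [mul_assoc]; exact dvd_mul_right _ _)).mp this
      obtain ⟨k', hk'⟩ := hds
      exact ⟨k', j, Or.inr ⟨by rw [hk']; ring, by rw [hj, hk']; ring⟩⟩

/-- coefficients of `w` -/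
def cw (d : ℕ) (n : ℕ) : K := (-1 : K) ^ (n * d) * wcoef K m q n d

lemma lam_qblock (d n : ℕ) : lam q (n : ZMod m) d = (-1) ^ d * (qblock K m q (n + 1) d)⁻¹ := by
  rw [lam, Finset.prod_neg, Finset.card_range, qblock, Finset.prod_inv_distrib]
  congr 2
  refine Finset.prod_congr rfl fun r _ => ?_
  congr 1; push_cast; ring

lemma cw_succ (d n : ℕ) : cw q d (n + 1) = lam q (n : ZMod m) d * cw q d n := by
  rw [cw, cw, wcoef, wcoef, Finset.prod_Icc_succ_top (by omega), lam_qblock]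
  ring

lemma cw_zero (d : ℕ) : cw q d 0 = 1 := by simp [cw, wcoef]

lemma cw_prod (d n : ℕ) : cw q d n = ∏ r ∈ Finset.range n, lam q (r : ZMod m) d := by
  induction n with
  | zero => simp [cw_zero]
  | succ n ih => rw [cw_succ, Finset.prod_range_succ, ih, mul_comm]

lemma cw_rec (hm1 : (-1 : K) ^ m = 1) {d : ℕ}
    (hζ : IsPrimitiveRoot (∏ i : ZMod m, q i) d) (i : ZMod m) :
    cw q d (i + 1).val = lam q i d * cw q d i.val := by
  have h1 : cw q d m = 1 := by
    rw [cw_prod, prod_range_zmod (fun r => lam q r d), prod_lam q hm1, inv_pow, hζ.pow_eq_one,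
      inv_one]
  have h2 := cw_succ q d i.val
  rw [ZMod.natCast_zmod_val] at h2
  rw [← h2]
  by_cases h : i.val + 1 < m
  · congr 1
    have : i + 1 = ((i.val + 1 : ℕ) : ZMod m) := by
      push_cast; rw [ZMod.natCast_zmod_val]
    rw [this, ZMod.val_cast_of_lt h]
  · have h3 : i.val + 1 = m := by have := ZMod.val_lt i; omega
    have : i + 1 = 0 := by
      have : i + 1 = ((i.val + 1 : ℕ) : ZMod m) := by
        push_cast; rw [ZMod.natCast_zmod_val]
      rw [this, h3, ZMod.natCast_self]
    rw [this, h3, h1, ZMod.val_zero, cw_zero]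

lemma eps_eq (hcase : Even m ∨ ringChar K = 2) (hm : 1 ≤ m) (d : ℕ) :
    ∏ l ∈ Finset.range m, kap q 0 d (l * d) = (-1 : K) ^ (m * d / 2) *
      ∏ l ∈ Finset.Icc 1 (m - 1), ∏ k ∈ Finset.Icc 1 (l * d), (qblock K m q k d)⁻¹ := by
  have hk : ∀ n, kap q 0 d n = (-1 : K) ^ (d * n) * ∏ k ∈ Finset.Icc 1 n, (qblock K m q k d)⁻¹ := by
    intro n
    induction n with
    | zero => simp [kap]
    | succ n ih =>
      rw [kap, Finset.prod_range_succ, ← kap, ih, Finset.prod_Icc_succ_top (by omega), zero_add,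
        lam_qblock]
      ring
  have h2 : ∀ n, ∏ l ∈ Finset.range (n + 1), kap q 0 d (l * d) =
      (-1 : K) ^ (d * d * ∑ l ∈ Finset.range (n + 1), l) *
      ∏ l ∈ Finset.Icc 1 n, ∏ k ∈ Finset.Icc 1 (l * d), (qblock K m q k d)⁻¹ := by
    intro n
    induction n with
    | zero => simp [kap]
    | succ n ih =>
      rw [Finset.prod_range_succ, ih, Finset.prod_Icc_succ_top (by omega), hk,
        Finset.sum_range_succ _ (n + 1)]
      ring
  obtain ⟨n, rfl⟩ : ∃ n, m = n + 1 := ⟨m - 1, by omega⟩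
  rw [h2 n, Nat.add_sub_cancel]
  congr 1
  rcases hcase with h1 | h1
  · obtain ⟨h, hh⟩ := h1
    have e1 : ∑ l ∈ Finset.range (n + 1), l = h * n := by
      have := Finset.sum_range_id_mul_two (n + 1)
      rw [Nat.add_sub_cancel] at this
      have h3 : (n + 1) * n = h * n * 2 := by rw [hh]; ring
      omega
    have e2 : (n + 1) * d / 2 = h * d := by
      rw [hh, show (h + h) * d = 2 * (h * d) by ring]; simp
    rw [e1, e2, neg_one_pow_congr]
    have : ¬ Even n := by
      intro h'
      obtain ⟨r, hr⟩ := h'; omega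
    simp only [Nat.even_mul]
    tauto
  · have : CharP K 2 := ringChar.of_eq h1
    rw [CharTwo.neg_eq, one_pow, one_pow]

lemma center_ext {z z' : ExtAlg K m q} (hz : z ∈ Subalgebra.center K (ExtAlg K m q))
    (hz' : z' ∈ Subalgebra.center K (ExtAlg K m q))
    (h : xe K m q 0 * z = xe K m q 0 * z') : z = z' := by
  have h0 : ∀ v : ExtAlg K m q, v + (-1 : K) • v = 0 := by
    intro v
    have : ((1 : K) + (-1)) • v = 0 := by rw [add_neg_cancel, zero_smul]
    rwa [add_smul, one_smul] at this
  have h1 : z + (-1 : K) • z' = 0 := by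
    apply center_eq_zero q (add_mem hz (Subalgebra.smul_mem _ hz' _))
    rw [mul_add, mul_smul_comm, h, h0]
  have h2 := congrArg (coord q) h1
  rw [map_add, map_smul, map_zero, neg_one_smul, ← sub_eq_add_neg, sub_eq_zero] at h2
  rw [← psi_coord q z, h2, psi_coord]

lemma lead_bas {z : ExtAlg K m q} {s t : ℕ} {u : K} (h : Lead q z s t u)
    (hst : (s : ZMod m) = t) : xe K m q 0 * z = u • bas q (0, s, t) := by
  rw [h, bas_eq]; rw [hst]

end helpers



open MvPolynomial in
lemma poly_reduce {K : Type} [Field K] (m : ℕ) (hm : 1 ≤ m) (ε : K)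
    (p : MvPolynomial (Fin 3) K) :
    ∃ r : MvPolynomial (Fin 3) K, (∀ n ∈ r.support, n 2 < m) ∧
      p - r ∈ Ideal.span {(X 2 : MvPolynomial (Fin 3) K) ^ m - C ε * (X 0 * X 1)} := by
  classical
  induction p using MvPolynomial.induction_on' with
  | monomial u a =>
    induction hn : u 2 using Nat.strong_induction_on generalizing u a with
    | _ n ih =>
      by_cases hlt : n < m
      · refine ⟨monomial u a, ?_, by simp⟩
        intro n' hn'
        have := support_monomial_subset hn'
        rw [Finset.mem_singleton] at this
        rw [this, hn]; exact hlt
      · obtain ⟨v, rfl⟩ : ∃ v, u = v + Finsupp.single 2 m := by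
          refine ⟨u - Finsupp.single 2 m, (tsub_add_cancel_of_le ?_).symm⟩
          rw [Finsupp.single_le_iff, hn]; omega
        obtain ⟨r, hr, hr'⟩ := ih ((v + Finsupp.single 0 1 + Finsupp.single 1 1 : Fin 3 →₀ ℕ) 2)
          (by rw [← hn]; simp; omega) (v + Finsupp.single 0 1 + Finsupp.single 1 1) (a * ε) rfl
        refine ⟨r, hr, ?_⟩
        have e : monomial (v + Finsupp.single 2 m) a -
            monomial (v + Finsupp.single 0 1 + Finsupp.single 1 1) (a * ε) =
            monomial v a * ((X 2 : MvPolynomial (Fin 3) K) ^ m - C ε * (X 0 * X 1)) := by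
          rw [mul_sub, X_pow_eq_monomial, monomial_mul, mul_one, X, X, monomial_mul, C_mul_monomial,
            monomial_mul]
          simp [add_assoc]
        have h2 : monomial v a * ((X 2 : MvPolynomial (Fin 3) K) ^ m - C ε * (X 0 * X 1)) ∈
            Ideal.span {(X 2 : MvPolynomial (Fin 3) K) ^ m - C ε * (X 0 * X 1)} :=
          Ideal.mul_mem_left _ _ (Ideal.mem_span_singleton_self _)
        rw [← e] at h2
        simpa using add_mem h2 hr'
  | add p p' h h' =>
    obtain ⟨r, h1, h2⟩ := h
    obtain ⟨r', h1', h2'⟩ := h'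
    refine ⟨r + r', ?_, ?_⟩
    · intro n hn
      rcases Finset.mem_union.mp (support_add hn) with h | h
      · exact h1 n h
      · exact h1' n h
    · simpa [add_sub_add_comm] using add_mem h2 h2'

open MvPolynomial in
/-- if `ζ` is a primitive `d`-th root of unity and `m` is even or `char K = 2`,
then `K[X,Y,W]/⟨W^m - ε X Y⟩ → Z_gr(E(Λ_q))`, `X ↦ x`, `Y ↦ y`, `W ↦ w`,
is a `K`-algebra isomorphism. -/
theorem graded_centre_structure_m_even_or_char_two
    (K : Type) [Field K] (m : ℕ) [NeZero m] (hm : 1 ≤ m)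
    (q : ZMod m → K) (hq : ∀ i, q i ≠ 0)
    (d : ℕ) (hd : 0 < d) (hζ : IsPrimitiveRoot (∏ i : ZMod m, q i) d)
    (hcase : Even m ∨ ringChar K = 2) :
    let x : ExtAlg K m q := ∑ i : ZMod m, gam K m q i (d * m)
    let y : ExtAlg K m q := ∑ i : ZMod m, del K m q i (d * m)
    let w : ExtAlg K m q := ∑ i : ZMod m, ((-1 : K) ^ (i.val * d) * wcoef K m q i.val d) •
      (gam K m q i d * del K m q i d)
    let ε : K := (-1 : K) ^ (m * d / 2) *
      ∏ l ∈ Finset.Icc 1 (m - 1), ∏ k ∈ Finset.Icc 1 (l * d), (qblock K m q k d)⁻¹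
    ∃ f : (MvPolynomial (Fin 3) K ⧸
        Ideal.span {(X 2 : MvPolynomial (Fin 3) K) ^ m - C ε * (X 0 * X 1)}) ≃ₐ[K]
          ↥(ZGr K m q),
      (↑(f (Ideal.Quotient.mk _ (X 0))) : ExtAlg K m q) = x ∧
      (↑(f (Ideal.Quotient.mk _ (X 1))) : ExtAlg K m q) = y ∧
      (↑(f (Ideal.Quotient.mk _ (X 2))) : ExtAlg K m q) = w := by
  classical
  intro x y w ε
  have hm1 : (-1 : K) ^ m = 1 := neg_one_pow_eq hcase id
  have hdm : ((d * m : ℕ) : ZMod m) = 0 := by simp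
  have hlam : ∀ i, lam q i (d * m) = 1 := by
    intro i
    rw [mul_comm, lam_mul q hm1, inv_pow, hζ.pow_eq_one, inv_one]
  -- the three elements as candidates
  have hx : x = cand q (fun _ => 1) (d * m) 0 := by
    refine Finset.sum_congr rfl fun i _ => ?_
    have := hx_ge q i (d * m)
    rw [hdm, add_zero] at this
    rw [one_smul, del, this]
  have hy : y = cand q (fun _ => 1) 0 (d * m) := by
    refine Finset.sum_congr rfl fun i _ => ?_
    have := hx_ed q i (d * m)
    rw [hdm, add_zero] at this
    rw [one_smul, gam, this]
  have hw : w = cand q (fun i => cw q d i.val) d d := rfl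
  have hxc : x ∈ Subalgebra.center K (ExtAlg K m q) := by
    rw [hx]
    exact cand_center q _ _ _ (by simp) (fun i => by simp [lam_zero]) (fun i => by simp [hlam])
  have hyc : y ∈ Subalgebra.center K (ExtAlg K m q) := by
    rw [hy]
    exact cand_center q _ _ _ (by simp) (fun i => by simp [hlam]) (fun i => by simp [lam_zero])
  have hwc : w ∈ Subalgebra.center K (ExtAlg K m q) := by
    rw [hw]
    exact cand_center q _ _ _ rfl (fun i => cw_rec q hm1 hζ i) (fun i => cw_rec q hm1 hζ i)
  have hxl : Lead q x (d * m) 0 1 := by rw [hx]; exact cand_lead q _ _ _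
  have hyl : Lead q y 0 (d * m) 1 := by rw [hy]; exact cand_lead q _ _ _
  have hwl : Lead q w d d 1 := by
    have := cand_lead q (fun i => cw q d i.val) d d
    simp only [ZMod.val_zero, cw_zero] at this
    rw [hw]; exact this
  -- the relation
  have hrel : w ^ m = ε • (x * y) := by
    apply center_ext q (pow_mem hwc m) (Subalgebra.smul_mem _ (mul_mem hxc hyc) _)
    have h1 := lead_pow_d q hwc hwl m
    rw [eps_eq q hcase hm d] at h1
    have h2 := lead_mul q hxc hxl hyl (by simp) (by simp)
    rw [Lead] at h1 h2
    rw [h1, mul_smul_comm, h2]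
    simp [kap, mul_comm m d, ε]
  -- monomials
  have hmon : ∀ i j k : ℕ, ∃ u : K, u ≠ 0 ∧
      Lead q (x ^ i * y ^ j * w ^ k) (k * d + i * (d * m)) (k * d + j * (d * m)) u := by
    intro i j k
    obtain ⟨u1, hu1, h1⟩ := lead_pow q hq hxc hxl one_ne_zero (by simp) i
    obtain ⟨u2, hu2, h2⟩ := lead_pow q hq hyc hyl one_ne_zero (by simp) j
    obtain ⟨u3, hu3, h3⟩ := lead_pow q hq hwc hwl one_ne_zero rfl k
    have h12 := lead_mul q (pow_mem hxc i) h1 h2 (by simp) (by simp)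
    have h123 := lead_mul q (mul_mem (pow_mem hxc i) (pow_mem hyc j)) h12 h3 (by simp) (by simp)
    refine ⟨_, ?_, by convert h123 using 1 <;> ring⟩
    · exact mul_ne_zero (mul_ne_zero (mul_ne_zero (mul_ne_zero hu1 hu2) (kap_ne q hq _ _ _)) hu3)
        (kap_ne q hq _ _ _)
  -- the graded centre is the centre
  let phi : MvPolynomial (Fin 3) K →ₐ[K] Subalgebra.center K (ExtAlg K m q) :=
    aeval ![⟨x, hxc⟩, ⟨y, hyc⟩, ⟨w, hwc⟩]
  have hphi0 : (phi (X 0) : ExtAlg K m q) = x := by simp [phi]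
  have hphi1 : (phi (X 1) : ExtAlg K m q) = y := by simp [phi]
  have hphi2 : (phi (X 2) : ExtAlg K m q) = w := by simp [phi]
  have hphim : ∀ (n : Fin 3 →₀ ℕ) (c : K), (phi (monomial n c) : ExtAlg K m q) =
      c • (x ^ n 0 * y ^ n 1 * w ^ n 2) := by
    intro n c
    have e : monomial n c = c • ((X 0 : MvPolynomial (Fin 3) K) ^ n 0 * X 1 ^ n 1 * X 2 ^ n 2) := by
      rw [monomial_eq, Finsupp.prod_fintype _ _ (by simp), Fin.prod_univ_three, smul_eq_C_mul]
    rw [e, map_smul, map_mul, map_mul, map_pow, map_pow, map_pow]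
    push_cast
    rw [hphi0, hphi1, hphi2]
  have hsurj : Function.Surjective phi := by
    rintro ⟨z, hz⟩
    have hex : ∀ p : ZMod m × ℕ × ℕ, ∃ f : MvPolynomial (Fin 3) K, coord q z p ≠ 0 →
        xe K m q 0 * (phi f : ExtAlg K m q) = xe K m q 0 * bas q p := by
      rintro ⟨i, s, t⟩
      by_cases hne : coord q z (i, s, t) ≠ 0
      swap
      · exact ⟨0, fun h => absurd h hne⟩
      by_cases hi : i = 0
      · subst hi
        have hst := supp_of_comm_e q z (fun i => center_e q hz _) 0 s t hne
        have hb : xe K m q 0 * bas q ((0 : ZMod m), s, t) = bas q (0, s, t) := by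
          rw [bas, ← mul_assoc, hx_eg]
        have main : ∀ i j k : ℕ, s = k * d + i * (d * m) → t = k * d + j * (d * m) →
            ∃ f : MvPolynomial (Fin 3) K,
              xe K m q 0 * (phi f : ExtAlg K m q) = bas q (0, s, t) := by
          intro i j k hs ht
          obtain ⟨u, hu, hl⟩ := hmon i j k
          rw [← hs, ← ht] at hl
          have hl' := lead_bas q hl hst
          refine ⟨u⁻¹ • (X 0 ^ i * X 1 ^ j * X 2 ^ k), ?_⟩
          rw [map_smul, map_mul, map_mul, map_pow, map_pow, map_pow]
          push_cast
          rw [hphi0, hphi1, hphi2, mul_smul_comm, hl', smul_smul, inv_mul_cancel₀ hu, one_smul]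
        obtain ⟨k, j, ⟨h1, h2⟩ | ⟨h1, h2⟩⟩ := admissible q hm1 hq hζ hz 0 hne
        · obtain ⟨f, hf⟩ := main j 0 k h1 (by simpa using h2)
          exact ⟨f, fun _ => by rw [hf, hb]⟩
        · obtain ⟨f, hf⟩ := main 0 j k (by simpa using h1) h2
          exact ⟨f, fun _ => by rw [hf, hb]⟩
      · refine ⟨0, fun _ => ?_⟩
        rw [bas, ← hx_eg q i s, ← mul_assoc, ← mul_assoc, hx_e_orth q 0 i (Ne.symm hi), zero_mul,
          zero_mul, map_zero]
        exact mul_zero _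
    choose F hF using hex
    refine ⟨∑ p ∈ (coord q z).support, coord q z p • F p, Subtype.ext ?_⟩
    apply center_ext q (Subtype.property _) hz
    have hz2 : z = ∑ p ∈ (coord q z).support, coord q z p • bas q p := by
      conv_lhs => rw [← psi_coord q z]
      rfl
    conv_rhs => rw [hz2]
    rw [map_sum, AddSubmonoidClass.coe_finsetSum, Finset.mul_sum, Finset.mul_sum]
    refine Finset.sum_congr rfl fun p hp => ?_
    rw [map_smul, mul_smul_comm, ← hF p (Finsupp.mem_support_iff.mp hp), ← mul_smul_comm]
    rfl
  have hrelphi : phi (X 2 ^ m - C ε * (X 0 * X 1)) = 0 := by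
    have e : (X 2 ^ m - C ε * (X 0 * X 1) : MvPolynomial (Fin 3) K) =
        X 2 ^ m + (-ε) • (X 0 * X 1) := by
      rw [neg_smul, smul_eq_C_mul, sub_eq_add_neg]
    rw [e, map_add, map_smul, map_pow, map_mul]
    apply Subtype.ext
    push_cast
    rw [hphi0, hphi1, hphi2, hrel, ← add_smul, add_neg_cancel, zero_smul]
  have hker : ∀ p, phi p = 0 →
      p ∈ Ideal.span {(X 2 : MvPolynomial (Fin 3) K) ^ m - C ε * (X 0 * X 1)} := by
    intro p hp
    obtain ⟨r, hr, hpr⟩ := poly_reduce m hm ε p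
    have hle : ∀ f ∈ Ideal.span {(X 2 : MvPolynomial (Fin 3) K) ^ m - C ε * (X 0 * X 1)},
        phi f = 0 := by
      intro f hf
      obtain ⟨g, rfl⟩ := Ideal.mem_span_singleton'.mp hf
      rw [map_mul, hrelphi, mul_zero]
    have hr0 : phi r = 0 := by
      have := hle _ hpr
      have e : p = (p - r) + r := by ring
      rw [e, map_add, this, zero_add] at hp
      exact hp
    suffices r = 0 by rwa [this, sub_zero] at hpr
    choose u hu hl using hmon
    have hsum : xe K m q 0 * (phi r : ExtAlg K m q) = ∑ n ∈ r.support, (coeff n r * u (n 0) (n 1) (n 2)) •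
        bas q (0, n 2 * d + n 0 * (d * m), n 2 * d + n 1 * (d * m)) := by
      conv_lhs => rw [r.as_sum]
      rw [map_sum, AddSubmonoidClass.coe_finsetSum, Finset.mul_sum]
      refine Finset.sum_congr rfl fun n _ => ?_
      rw [hphim, mul_smul_comm, lead_bas q (hl (n 0) (n 1) (n 2)) (by simp), smul_smul]
    rw [hr0] at hsum
    have hsum0 : (0 : VV K m) = ∑ n ∈ r.support, (coeff n r * u (n 0) (n 1) (n 2)) •
        Finsupp.single (0, n 2 * d + n 0 * (d * m), n 2 * d + n 1 * (d * m)) 1 := by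
      have h1 := congrArg (coord q) hsum
      rw [map_sum] at h1
      rw [show xe K m q 0 * ((0 : Subalgebra.center K (ExtAlg K m q)) : ExtAlg K m q) = 0 from
        mul_zero _, map_zero] at h1
      rw [h1]
      refine Finset.sum_congr rfl fun n _ => ?_
      rw [map_smul, coord_bas]
    ext n
    rw [coeff_zero]
    by_contra hn
    have hns : n ∈ r.support := mem_support_iff.mpr hn
    have h1 := DFunLike.congr_fun hsum0
      (0, n 2 * d + n 0 * (d * m), n 2 * d + n 1 * (d * m))
    rw [Finsupp.finsetSum_apply, Finset.sum_eq_single n] at h1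
    · simp only [Finsupp.smul_apply, Finsupp.single_eq_same, smul_eq_mul, mul_one,
        Finsupp.coe_zero, Pi.zero_apply] at h1
      exact mul_ne_zero hn (hu _ _ _) h1.symm
    · intro n' hn' hne
      rw [Finsupp.smul_apply, Finsupp.single_apply, if_neg, smul_zero]
      intro heq
      simp only [Prod.mk.injEq, true_and] at heq
      apply hne
      obtain ⟨e1, e2⟩ := heq
      have hcancel : ∀ a b a' b' : ℕ, a * d + b * (d * m) = a' * d + b' * (d * m) → a < m →
          a' < m → a = a' ∧ b = b' := by
        intro a b a' b' h ha ha'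
        have h' : a + m * b = a' + m * b' := by
          apply Nat.eq_of_mul_eq_mul_left hd
          linarith
        have h3 := congrArg (· % m) h'
        have h4 := congrArg (· / m) h'
        simp only [Nat.add_mul_mod_self_left, Nat.mod_eq_of_lt ha, Nat.mod_eq_of_lt ha'] at h3
        simp only [Nat.add_mul_div_left _ _ hm, Nat.div_eq_of_lt ha, Nat.div_eq_of_lt ha',
          zero_add] at h4
        exact ⟨h3, h4⟩
      obtain ⟨a1, a2⟩ := hcancel _ _ _ _ e1 (hr n' hn') (hr n hns)
      obtain ⟨_, a3⟩ := hcancel _ _ _ _ e2 (hr n' hn') (hr n hns)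
      ext i
      fin_cases i
      · exact a2
      · exact a3
      · exact a1
    · intro h; exact absurd hns h
  have hZ : Subalgebra.center K (ExtAlg K m q) = ZGr K m q := by
    apply le_antisymm _ (zgr_le q hcase)
    intro z hz
    obtain ⟨f, hf⟩ := hsurj ⟨z, hz⟩
    have hxz : x ∈ ZGr K m q := by
      rw [hx] at hxc ⊢
      exact cand_zgr q hcase _ _ _ hxc (fun h => by simpa using h.mul_left d)
    have hyz : y ∈ ZGr K m q := by
      rw [hy] at hyc ⊢
      exact cand_zgr q hcase _ _ _ hyc (fun h => by simpa using h.mul_left d)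
    have hwz : w ∈ ZGr K m q := by
      rw [hw] at hwc ⊢
      exact cand_zgr q hcase _ _ _ hwc (fun _ => ⟨d, rfl⟩)
    have : z = (phi f : ExtAlg K m q) := by rw [hf]
    rw [this, f.as_sum, map_sum, AddSubmonoidClass.coe_finsetSum]
    refine sum_mem fun n _ => ?_
    rw [hphim]
    exact Subalgebra.smul_mem _
      (mul_mem (mul_mem (pow_mem hxz _) (pow_mem hyz _)) (pow_mem hwz _)) _
  have hlift : ∀ a ∈ Ideal.span {(X 2 : MvPolynomial (Fin 3) K) ^ m - C ε * (X 0 * X 1)},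
      phi a = 0 := by
    intro f hf
    obtain ⟨g, rfl⟩ := Ideal.mem_span_singleton'.mp hf
    rw [map_mul, hrelphi, mul_zero]
  have hbij : Function.Bijective (Ideal.Quotient.liftₐ _ phi hlift) := by
    constructor
    · rw [injective_iff_map_eq_zero]
      intro a ha
      obtain ⟨f, rfl⟩ := Ideal.Quotient.mk_surjective a
      exact Ideal.Quotient.eq_zero_iff_mem.mpr (hker f ha)
    · intro z
      obtain ⟨f, hf⟩ := hsurj z
      exact ⟨Ideal.Quotient.mk _ f, hf⟩
  exact ⟨(AlgEquiv.ofBijective _ hbij).trans (Subalgebra.equivOfEq _ _ hZ), hphi0, hphi1, hphi2⟩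
end
end

section
/- E(Λ_q) is finitely generated as a module over its subalgebra Z_gr(E(Λ_q)) if and only if ζ = q_0 q_1 ⋯ q_{m−1} is a root of unity. -/
open scoped BigOperators

noncomputable section

namespace ExtFin

set_option linter.unusedSectionVars false
set_option linter.unusedSimpArgs false

section rep
variable (K : Type) [Field K] (m : ℕ) [NeZero m] (q : ZMod m → K)

/-- product of `f` over `n` consecutive residues -/
def cyc (f : ZMod m → K) (i : ZMod m) (n : ℕ) : K := ∏ k ∈ Finset.range n, f (i + (k : ZMod m))

theorem cyc_m (f : ZMod m → K) (i : ZMod m) : cyc K m f i m = ∏ j : ZMod m, f j := by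
  unfold cyc
  symm
  refine Finset.prod_bij' (fun j _ => (j - i).val) (fun k _ => i + (k : ZMod m)) ?_ ?_ ?_ ?_ ?_
  · intro j _
    exact Finset.mem_range.2 (ZMod.val_lt _)
  · intro k _
    exact Finset.mem_univ _
  · intro j _
    simp
  · intro k hk
    simp only [add_sub_cancel_left]
    exact ZMod.val_cast_of_lt (Finset.mem_range.1 hk)
  · intro j _
    simp

theorem cyc_mul (f : ZMod m → K) (i : ZMod m) (r : ℕ) :
    cyc K m f i (m * r) = (∏ j : ZMod m, f j) ^ r := by
  induction r with
  | zero => simp [cyc]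
  | succ r ih =>
    rw [pow_succ, ← ih, ← cyc_m K m f i, mul_add, mul_one]
    unfold cyc
    rw [Finset.prod_range_add]
    simp

theorem cyc_succ (f : ZMod m → K) (i : ZMod m) (n : ℕ) :
    cyc K m f i (n + 1) = cyc K m f i n * f (i + n) := by
  unfold cyc
  rw [Finset.prod_range_succ]

theorem cyc_succ' (f : ZMod m → K) (i : ZMod m) (n : ℕ) :
    cyc K m f i (n + 1) = f i * cyc K m f (i + 1) n := by
  unfold cyc
  rw [Finset.prod_range_succ', mul_comm]
  simp [add_assoc, add_comm, add_left_comm]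

theorem prod_cyc (f : ZMod m → K) (n : ℕ) :
    ∏ i : ZMod m, cyc K m f i n = (∏ j : ZMod m, f j) ^ n := by
  unfold cyc
  rw [Finset.prod_comm]
  have : ∀ k ∈ Finset.range n, ∏ i : ZMod m, f (i + (k : ZMod m)) = ∏ j : ZMod m, f j := by
    intro k _
    exact Equiv.prod_comp (Equiv.addRight (k : ZMod m)) f
  rw [Finset.prod_congr rfl this]
  simp

theorem round (c κ : ZMod m → K) (h : ∀ i, c (i + 1) = κ i * c i) (i : ZMod m) :
    c i = (∏ j : ZMod m, κ j) * c i := by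
  have h2 : ∀ k : ℕ, c (i + k) = cyc K m κ i k * c i := by
    intro k
    induction k with
    | zero => simp [cyc]
    | succ k ih =>
      rw [cyc_succ, Nat.cast_succ, ← add_assoc, h, ih]
      ring
  have := h2 m
  rwa [cyc_m, CharP.cast_eq_zero, add_zero] at this

abbrev V := (ZMod m × ℕ × ℕ) →₀ K

def fq (q : ZMod m → K) : ZMod m → K := fun i => -(q i)⁻¹

def rE (i : ZMod m) : Module.End K (V K m) :=
  Finsupp.linearCombination K (fun p => if p.1 = i then Finsupp.single p (1 : K) else 0)
def rA (i : ZMod m) : Module.End K (V K m) :=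
  Finsupp.linearCombination K
    (fun p => if p.1 = i + 1 then Finsupp.single (i, p.2.1 + 1, p.2.2) (1 : K) else 0)
def rB (i : ZMod m) : Module.End K (V K m) :=
  Finsupp.linearCombination K
    (fun p => if p.1 = i then
      Finsupp.single (i + 1, p.2.1, p.2.2 + 1) (cyc K m (fq K m q) (i + 1) p.2.1) else 0)

theorem rE_single (i j : ZMod m) (s t : ℕ) (c : K) : rE K m i (Finsupp.single (j, s, t) c) =
    if j = i then Finsupp.single (j, s, t) c else 0 := by
  simp [rE]
theorem rA_single (i j : ZMod m) (s t : ℕ) (c : K) : rA K m i (Finsupp.single (j, s, t) c) =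
    if j = i + 1 then Finsupp.single (i, s + 1, t) c else 0 := by
  simp [rA]
theorem rB_single (i j : ZMod m) (s t : ℕ) (c : K) : rB K m q i (Finsupp.single (j, s, t) c) =
    if j = i then Finsupp.single (i + 1, s, t + 1) (c * cyc K m (fq K m q) (i + 1) s) else 0 := by
  simp [rB]

def rGen : Gen m → Module.End K (V K m)
  | Gen.e i => rE K m i
  | Gen.a i => rA K m i
  | Gen.abar i => rB K m q i

def rho0 : FA K m →ₐ[K] Module.End K (V K m) := FreeAlgebra.lift K (rGen K m q)

theorem rho0_e (i : ZMod m) : rho0 K m q (Ee K m i) = rE K m i := by simp [rho0, Ee, rGen]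
theorem rho0_a (i : ZMod m) : rho0 K m q (Aa K m i) = rA K m i := by simp [rho0, Aa, rGen]
theorem rho0_b (i : ZMod m) : rho0 K m q (Bb K m i) = rB K m q i := by simp [rho0, Bb, rGen]

theorem end_ext {f g : Module.End K (V K m)}
    (h : ∀ (j : ZMod m) (s t : ℕ), f (Finsupp.single (j, s, t) 1) = g (Finsupp.single (j, s, t) 1)) :
    f = g := by
  refine Finsupp.lhom_ext' ?_
  rintro ⟨j, s, t⟩
  refine LinearMap.ext_ring ?_
  exact h j s t

theorem rho0_rel : ∀ ⦃x y : FA K m⦄, PathRel K m x y → rho0 K m q x = rho0 K m q y := by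
  intro x y h
  cases h with
  | orth i j hij =>
    simp only [map_mul, map_zero, rho0_e]
    refine end_ext K m fun k s t => ?_
    rw [Module.End.mul_apply, rE_single]
    split_ifs with h
    · rw [rE_single, if_neg]
      · rfl
      · rw [h]; exact hij.symm
    · simp
  | idem i =>
    simp only [map_mul, rho0_e]
    refine end_ext K m fun k s t => ?_
    rw [Module.End.mul_apply, rE_single]
    split_ifs with h
    · rw [rE_single, if_pos h]
    · simp
  | total =>
    simp only [map_sum, map_one, rho0_e]
    refine end_ext K m fun k s t => ?_
    simp [LinearMap.sum_apply, rE_single]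
  | asrc i =>
    simp only [map_mul, rho0_e, rho0_a]
    refine end_ext K m fun k s t => ?_
    rw [Module.End.mul_apply, rA_single]
    split_ifs with h
    · rw [rE_single, if_pos rfl]
    · simp
  | atgt i =>
    simp only [map_mul, rho0_e, rho0_a]
    refine end_ext K m fun k s t => ?_
    rw [Module.End.mul_apply, rE_single]
    split_ifs with h
    · rfl
    · rw [rA_single, if_neg h]; simp
  | bsrc i =>
    simp only [map_mul, rho0_e, rho0_b]
    refine end_ext K m fun k s t => ?_
    rw [Module.End.mul_apply, rB_single]
    split_ifs with h
    · rw [rE_single, if_pos rfl]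
    · simp
  | btgt i =>
    simp only [map_mul, rho0_e, rho0_b]
    refine end_ext K m fun k s t => ?_
    rw [Module.End.mul_apply, rE_single]
    split_ifs with h
    · rfl
    · rw [rB_single, if_neg h]; simp

def rho1 : PathAlg K m →ₐ[K] Module.End K (V K m) :=
  RingQuot.liftAlgHom K ⟨rho0 K m q, rho0_rel K m q⟩

theorem rho1_e (i : ZMod m) : rho1 K m q (pe K m i) = rE K m i := by
  simp [rho1, pe, RingQuot.liftAlgHom_mkAlgHom_apply, rho0_e]
theorem rho1_a (i : ZMod m) : rho1 K m q (pa K m i) = rA K m i := by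
  simp [rho1, pa, RingQuot.liftAlgHom_mkAlgHom_apply, rho0_a]
theorem rho1_b (i : ZMod m) : rho1 K m q (pb K m i) = rB K m q i := by
  simp [rho1, pb, RingQuot.liftAlgHom_mkAlgHom_apply, rho0_b]

theorem rho1_rel : ∀ ⦃x y : PathAlg K m⦄, ExtRel K m q x y → rho1 K m q x = rho1 K m q y := by
  intro x y h
  cases h with
  | rel i =>
    simp only [map_add, map_smul, map_mul, map_zero, rho1_a, rho1_b]
    refine end_ext K m fun k s t => ?_
    rw [LinearMap.add_apply, LinearMap.smul_apply, Module.End.mul_apply, Module.End.mul_apply,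
      rB_single, rA_single, sub_add_cancel]
    split_ifs with h
    · rw [rA_single, if_pos rfl, rB_single, if_pos rfl, sub_add_cancel, cyc_succ',
        Finsupp.smul_single, ← Finsupp.single_add]
      simp [fq]
    · simp

def rho : ExtAlg K m q →ₐ[K] Module.End K (V K m) :=
  RingQuot.liftAlgHom K ⟨rho1 K m q, rho1_rel K m q⟩

theorem rho_e (i : ZMod m) : rho K m q (xe K m q i) = rE K m i := by
  simp [rho, xe, RingQuot.liftAlgHom_mkAlgHom_apply, rho1_e]
theorem rho_a (i : ZMod m) : rho K m q (xa K m q i) = rA K m i := by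
  simp [rho, xa, RingQuot.liftAlgHom_mkAlgHom_apply, rho1_a]
theorem rho_b (i : ZMod m) : rho K m q (xb K m q i) = rB K m q i := by
  simp [rho, xb, RingQuot.liftAlgHom_mkAlgHom_apply, rho1_b]

/-! relations in E -/
local notation "𝐞" => xe K m q
local notation "𝐚" => xa K m q
local notation "𝐛" => xb K m q

theorem e_orth (i j : ZMod m) (h : i ≠ j) : 𝐞 i * 𝐞 j = 0 := by
  have := RingQuot.mkAlgHom_rel K (PathRel.orth (K := K) i j h)
  simpa [xe, pe] using congrArg (RingQuot.mkAlgHom K (ExtRel K m q)) this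
theorem e_idem (i : ZMod m) : 𝐞 i * 𝐞 i = 𝐞 i := by
  have := RingQuot.mkAlgHom_rel K (PathRel.idem (K := K) i)
  simpa [xe, pe] using congrArg (RingQuot.mkAlgHom K (ExtRel K m q)) this
theorem e_total : ∑ i, 𝐞 i = 1 := by
  have := RingQuot.mkAlgHom_rel K (PathRel.total (K := K) (m := m))
  simpa [xe, pe] using congrArg (RingQuot.mkAlgHom K (ExtRel K m q)) this
theorem e_a (i : ZMod m) : 𝐞 i * 𝐚 i = 𝐚 i := by
  have := RingQuot.mkAlgHom_rel K (PathRel.asrc (K := K) i)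
  simpa [xe, pe, xa, pa] using congrArg (RingQuot.mkAlgHom K (ExtRel K m q)) this
theorem a_e (i : ZMod m) : 𝐚 i * 𝐞 (i + 1) = 𝐚 i := by
  have := RingQuot.mkAlgHom_rel K (PathRel.atgt (K := K) i)
  simpa [xe, pe, xa, pa] using congrArg (RingQuot.mkAlgHom K (ExtRel K m q)) this
theorem e_b (i : ZMod m) : 𝐞 (i + 1) * 𝐛 i = 𝐛 i := by
  have := RingQuot.mkAlgHom_rel K (PathRel.bsrc (K := K) i)
  simpa [xe, pe, xb, pb] using congrArg (RingQuot.mkAlgHom K (ExtRel K m q)) this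
theorem b_e (i : ZMod m) : 𝐛 i * 𝐞 i = 𝐛 i := by
  have := RingQuot.mkAlgHom_rel K (PathRel.btgt (K := K) i)
  simpa [xe, pe, xb, pb] using congrArg (RingQuot.mkAlgHom K (ExtRel K m q)) this
theorem ab_rel (i : ZMod m) : (q i)⁻¹ • (𝐚 i * 𝐛 i) + 𝐛 (i - 1) * 𝐚 (i - 1) = 0 := by
  have := RingQuot.mkAlgHom_rel K (ExtRel.rel (K := K) (q := q) i)
  simpa [xa, xb] using this

def X : ExtAlg K m q := ∑ i, 𝐚 i
def Y : ExtAlg K m q := ∑ i, 𝐛 i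

theorem eX (i : ZMod m) : 𝐞 i * X K m q = 𝐚 i := by
  unfold X
  rw [Finset.mul_sum, Finset.sum_eq_single i]
  · exact e_a K m q i
  · intro j _ hj
    rw [← e_a K m q j, ← mul_assoc, e_orth K m q i j hj.symm, zero_mul]
  · simp
theorem Xe (i : ZMod m) : X K m q * 𝐞 (i + 1) = 𝐚 i := by
  unfold X
  rw [Finset.sum_mul, Finset.sum_eq_single i]
  · exact a_e K m q i
  · intro j _ hj
    rw [← a_e K m q j, mul_assoc, e_orth K m q (j + 1) (i + 1) (by simpa using hj), mul_zero]
  · simp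
theorem eY (i : ZMod m) : 𝐞 (i + 1) * Y K m q = 𝐛 i := by
  unfold Y
  rw [Finset.mul_sum, Finset.sum_eq_single i]
  · exact e_b K m q i
  · intro j _ hj
    rw [← e_b K m q j, ← mul_assoc, e_orth K m q (i + 1) (j + 1) (by simpa using hj.symm), zero_mul]
  · simp
theorem Ye (i : ZMod m) : Y K m q * 𝐞 i = 𝐛 i := by
  unfold Y
  rw [Finset.sum_mul, Finset.sum_eq_single i]
  · exact b_e K m q i
  · intro j _ hj
    rw [← b_e K m q j, mul_assoc, e_orth K m q j i hj, mul_zero]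
  · simp

theorem eX_comm (i : ZMod m) : 𝐞 i * X K m q = X K m q * 𝐞 (i + 1) := by rw [eX, Xe]
theorem eY_comm (i : ZMod m) : 𝐞 (i + 1) * Y K m q = Y K m q * 𝐞 i := by rw [eY, Ye]

theorem eXp (i : ZMod m) (s : ℕ) : 𝐞 i * X K m q ^ s = X K m q ^ s * 𝐞 (i + s) := by
  induction s with
  | zero => simp
  | succ s ih =>
    rw [pow_succ, ← mul_assoc, ih, mul_assoc, eX_comm, ← mul_assoc, Nat.cast_succ, add_assoc]
theorem eYp (i : ZMod m) (s : ℕ) : 𝐞 (i + s) * Y K m q ^ s = Y K m q ^ s * 𝐞 i := by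
  induction s with
  | zero => simp
  | succ s ih =>
    rw [pow_succ', ← mul_assoc, Nat.cast_succ, ← add_assoc, eY_comm, mul_assoc, ih, ← mul_assoc]

theorem eYX (i : ZMod m) : 𝐞 i * (Y K m q * X K m q)
    = fq K m q i • (𝐞 i * (X K m q * Y K m q)) := by
  have h1 : 𝐞 i * (X K m q * Y K m q) = 𝐚 i * 𝐛 i := by
    rw [← mul_assoc, eX_comm, mul_assoc, eY, ← a_e, ← Xe, mul_assoc, mul_assoc, e_b, e_b]
  have h2 : 𝐞 i * (Y K m q * X K m q) = 𝐛 (i - 1) * 𝐚 (i - 1) := by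
    have h3 := eY_comm K m q (i - 1)
    rw [sub_add_cancel] at h3
    rw [← mul_assoc, h3, mul_assoc, eX, ← b_e, ← Ye, mul_assoc, mul_assoc, e_a, e_a]
  rw [h1, h2, fq]
  have h4 := ab_rel K m q i
  have h5 : (q i)⁻¹ • (𝐚 i * 𝐛 i) + (-(q i)⁻¹) • (𝐚 i * 𝐛 i) = 0 := by
    rw [← add_smul, add_neg_cancel, zero_smul]
  rw [← add_zero (𝐛 (i - 1) * 𝐚 (i - 1)), ← h5, ← add_assoc,
    add_comm (𝐛 (i - 1) * 𝐚 (i - 1)), h4, zero_add]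

theorem eYXp (i : ZMod m) (s : ℕ) : 𝐞 i * (Y K m q * X K m q ^ s)
    = cyc K m (fq K m q) i s • (𝐞 i * (X K m q ^ s * Y K m q)) := by
  induction s with
  | zero => simp [cyc]
  | succ s ih =>
    rw [pow_succ, ← mul_assoc (Y K m q), ← mul_assoc (𝐞 i), ih, smul_mul_assoc, cyc_succ, mul_smul]
    congr 1
    rw [mul_assoc, mul_assoc, ← mul_assoc (𝐞 i), eXp, mul_assoc, eYX, mul_smul_comm, ← mul_assoc,
      ← eXp]
    simp only [mul_assoc]

/-- `f` reversed -/
def fr (q : ZMod m → K) : ZMod m → K := fun i => fq K m q (-i)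

theorem eYpX (i : ZMod m) (t : ℕ) : 𝐞 i * (Y K m q ^ t * X K m q)
    = cyc K m (fr K m q) (-i) t • (𝐞 i * (X K m q * Y K m q ^ t)) := by
  induction t generalizing i with
  | zero => simp [cyc]
  | succ t ih =>
    have h3 := eY_comm K m q (i - 1)
    rw [sub_add_cancel] at h3
    rw [pow_succ', mul_assoc, ← mul_assoc, h3, mul_assoc, ih, cyc_succ', mul_comm, mul_smul,
      mul_smul_comm]
    have : -(i - 1) = -i + 1 := by ring
    rw [this]
    congr 1
    rw [← mul_assoc, ← h3, mul_assoc, ← mul_assoc (Y K m q), ← mul_assoc, eYX, smul_mul_assoc]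
    simp only [mul_assoc, fr, neg_neg]

/-- basis monomials -/
def mon (p : ZMod m × ℕ × ℕ) : ExtAlg K m q := 𝐞 p.1 * (X K m q ^ p.2.1 * Y K m q ^ p.2.2)

theorem e_mon (i j : ZMod m) (s t : ℕ) : 𝐞 i * mon K m q (j, s, t)
    = if j = i then mon K m q (j, s, t) else 0 := by
  unfold mon
  rw [← mul_assoc]
  split_ifs with h
  · rw [h, e_idem]
  · rw [e_orth K m q i j (Ne.symm h), zero_mul]
theorem X_mon (i : ZMod m) (s t : ℕ) : X K m q * mon K m q (i, s, t) = mon K m q (i - 1, s + 1, t) := by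
  have h3 := eX_comm K m q (i - 1)
  rw [sub_add_cancel] at h3
  unfold mon
  rw [← mul_assoc, ← h3, pow_succ']
  simp only [mul_assoc]
theorem Y_mon (i : ZMod m) (s t : ℕ) : Y K m q * mon K m q (i, s, t)
    = cyc K m (fq K m q) (i + 1) s • mon K m q (i + 1, s, t + 1) := by
  unfold mon
  dsimp only
  rw [← mul_assoc, ← eY_comm, pow_succ', mul_assoc, ← mul_assoc (Y K m q), ← mul_assoc, eYXp,
    smul_mul_assoc]
  simp only [mul_assoc]
theorem mon_Y (i : ZMod m) (s t : ℕ) : mon K m q (i, s, t) * Y K m q = mon K m q (i, s, t + 1) := by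
  unfold mon
  simp only [mul_assoc, pow_succ]
theorem mon_X (i : ZMod m) (s t : ℕ) : mon K m q (i, s, t) * X K m q =
    cyc K m (fr K m q) (-(i + s)) t • mon K m q (i, s + 1, t) := by
  unfold mon
  dsimp only
  rw [← mul_assoc, eXp, mul_assoc, mul_assoc, eYpX, mul_smul_comm, ← mul_assoc, ← eXp, pow_succ]
  simp only [mul_assoc]

theorem span_mon : Submodule.span K (Set.range (mon K m q)) = ⊤ := by
  set S := Submodule.span K (Set.range (mon K m q)) with hS
  have hle : ∀ w : ExtAlg K m q, (∀ p, w * mon K m q p ∈ S) → ∀ v ∈ S, w * v ∈ S := by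
    intro w hw v hv
    have : S ≤ S.comap (LinearMap.mulLeft K w) := by
      rw [hS, Submodule.span_le]
      rintro _ ⟨p, rfl⟩
      exact hw p
    exact this hv
  have hm : ∀ p, mon K m q p ∈ S := fun p => Submodule.subset_span ⟨p, rfl⟩
  have he : ∀ i, ∀ v ∈ S, 𝐞 i * v ∈ S := by
    intro i
    apply hle
    rintro ⟨j, s, t⟩
    rw [e_mon]
    split_ifs
    · exact hm _
    · exact S.zero_mem
  have hX : ∀ v ∈ S, X K m q * v ∈ S := by
    apply hle
    rintro ⟨j, s, t⟩
    rw [X_mon]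
    exact hm _
  have hY : ∀ v ∈ S, Y K m q * v ∈ S := by
    apply hle
    rintro ⟨j, s, t⟩
    rw [Y_mon]
    exact S.smul_mem _ (hm _)
  have h1 : (1 : ExtAlg K m q) ∈ S := by
    rw [← e_total K m q]
    refine S.sum_mem fun i _ => ?_
    have := hm (i, 0, 0)
    simpa [mon] using this
  let π : FA K m →ₐ[K] ExtAlg K m q :=
    (RingQuot.mkAlgHom K (ExtRel K m q)).comp (RingQuot.mkAlgHom K (PathRel K m))
  have hπ : Function.Surjective π :=
    (RingQuot.mkAlgHom_surjective K _).comp (RingQuot.mkAlgHom_surjective K _)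
  have key : ∀ w : FA K m, ∀ v ∈ S, π w * v ∈ S := by
    intro w
    induction w using FreeAlgebra.induction with
    | grade0 r =>
      intro v hv
      rw [AlgHom.commutes, ← Algebra.smul_def]
      exact S.smul_mem _ hv
    | grade1 g =>
      intro v hv
      cases g with
      | e i => exact he i v hv
      | a i =>
        have : π (FreeAlgebra.ι K (Gen.a i)) = 𝐚 i := rfl
        rw [this, ← eX, mul_assoc]
        exact he _ _ (hX _ hv)
      | abar i =>
        have : π (FreeAlgebra.ι K (Gen.abar i)) = 𝐛 i := rfl
        rw [this, ← eY, mul_assoc]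
        exact he _ _ (hY _ hv)
    | mul a b ha hb =>
      intro v hv
      rw [map_mul, mul_assoc]
      exact ha _ (hb _ hv)
    | add a b ha hb =>
      intro v hv
      rw [map_add, add_mul]
      exact S.add_mem (ha _ hv) (hb _ hv)
  rw [eq_top_iff]
  intro x _
  obtain ⟨w, rfl⟩ := hπ x
  simpa using key w 1 h1

/-- uniform vectors -/
def u (s t : ℕ) : V K m := ∑ i : ZMod m, Finsupp.single (i, s, t) 1

theorem rho_X_u (s t : ℕ) : rho K m q (X K m q) (u K m s t) = u K m (s + 1) t := by
  unfold X u
  simp only [map_sum, LinearMap.sum_apply, rho_a, rA_single]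
  rw [Finset.sum_comm]
  simp
theorem rho_Y_u (t : ℕ) : rho K m q (Y K m q) (u K m 0 t) = u K m 0 (t + 1) := by
  unfold Y u
  simp only [map_sum, LinearMap.sum_apply, rho_b, rB_single]
  simp only [Finset.sum_ite_eq', Finset.sum_ite_eq, Finset.mem_univ, if_true]
  simp only [cyc, Finset.range_zero, Finset.prod_empty, mul_one]
  exact Equiv.sum_comp (Equiv.addRight (1 : ZMod m))
    (fun i => (Finsupp.single (i, 0, t + 1) (1 : K) : V K m))
theorem rho_e_u (i : ZMod m) (s t : ℕ) : rho K m q (𝐞 i) (u K m s t) = Finsupp.single (i, s, t) 1 := by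
  unfold u
  simp [rho_e, rE_single]

def phi : ExtAlg K m q →ₗ[K] V K m := (LinearMap.applyₗ (u K m 0 0)).comp (rho K m q).toLinearMap

theorem phi_mon (p : ZMod m × ℕ × ℕ) : phi K m q (mon K m q p) = Finsupp.single p 1 := by
  obtain ⟨i, s, t⟩ := p
  have hy : ∀ t, rho K m q (Y K m q ^ t) (u K m 0 0) = u K m 0 t := by
    intro t
    induction t with
    | zero => simp
    | succ t ih => rw [pow_succ', map_mul, Module.End.mul_apply, ih, rho_Y_u]
  have hx : ∀ s, rho K m q (X K m q ^ s) (u K m 0 t) = u K m s t := by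
    intro s
    induction s with
    | zero => simp
    | succ t ih => rw [pow_succ', map_mul, Module.End.mul_apply, ih, rho_X_u]
  change rho K m q (mon K m q (i, s, t)) (u K m 0 0) = _
  unfold mon
  rw [map_mul, map_mul, Module.End.mul_apply, Module.End.mul_apply, hy, hx, rho_e_u]

/-- expansion in monomials -/
def psi : V K m →ₗ[K] ExtAlg K m q := Finsupp.linearCombination K (mon K m q)

theorem phi_psi (v : V K m) : phi K m q (psi K m q v) = v := by
  have : (phi K m q).comp (psi K m q) = LinearMap.id := by
    refine end_ext K m fun j s t => ?_
    simp [psi, phi_mon]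
  exact LinearMap.congr_fun this v

theorem psi_surj (z : ExtAlg K m q) : ∃ v, psi K m q v = z := by
  have : z ∈ Submodule.span K (Set.range (mon K m q)) := by rw [span_mon]; trivial
  rw [← Finsupp.range_linearCombination] at this
  exact this

theorem psi_phi (z : ExtAlg K m q) : psi K m q (phi K m q z) = z := by
  obtain ⟨v, rfl⟩ := psi_surj K m q z
  rw [phi_psi]

theorem lin_ext (f g : ExtAlg K m q →ₗ[K] K) (h : ∀ p, f (mon K m q p) = g (mon K m q p)) :
    f = g := by
  refine LinearMap.ext_on_range (span_mon K m q) h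

/-- coefficient of monomials -/
def co (p : ZMod m × ℕ × ℕ) : ExtAlg K m q →ₗ[K] K := (Finsupp.lapply p).comp (phi K m q)

theorem co_mon (p r : ZMod m × ℕ × ℕ) : co K m q p (mon K m q r) = if r = p then 1 else 0 := by
  classical
  simp [co, phi_mon, Finsupp.single_apply]

theorem co_XL (i : ZMod m) (s t : ℕ) (z : ExtAlg K m q) :
    co K m q (i, s + 1, t) (X K m q * z) = co K m q (i + 1, s, t) z := by
  have := lin_ext K m q ((co K m q (i, s + 1, t)).comp (LinearMap.mulLeft K (X K m q)))
    (co K m q (i + 1, s, t)) (by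
      rintro ⟨j, a, b⟩
      simp only [LinearMap.comp_apply, LinearMap.mulLeft_apply, X_mon, co_mon, Prod.mk.injEq,
        add_left_inj, sub_eq_iff_eq_add])
  exact LinearMap.congr_fun this z
theorem co_XR (i : ZMod m) (s t : ℕ) (z : ExtAlg K m q) :
    co K m q (i, s + 1, t) (z * X K m q) =
      cyc K m (fr K m q) (-(i + s)) t * co K m q (i, s, t) z := by
  have := lin_ext K m q ((co K m q (i, s + 1, t)).comp (LinearMap.mulRight K (X K m q)))
    (cyc K m (fr K m q) (-(i + s)) t • co K m q (i, s, t)) (by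
      rintro ⟨j, a, b⟩
      simp only [LinearMap.comp_apply, LinearMap.mulRight_apply, mon_X, co_mon, Prod.mk.injEq,
        add_left_inj, map_smul, LinearMap.smul_apply, smul_eq_mul]
      split_ifs with h
      · obtain ⟨rfl, rfl, rfl⟩ := h
        rfl
      · simp)
  exact LinearMap.congr_fun this z
theorem co_YL (i : ZMod m) (s t : ℕ) (z : ExtAlg K m q) :
    co K m q (i + 1, s, t + 1) (Y K m q * z) =
      cyc K m (fq K m q) (i + 1) s * co K m q (i, s, t) z := by
  have := lin_ext K m q ((co K m q (i + 1, s, t + 1)).comp (LinearMap.mulLeft K (Y K m q)))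
    (cyc K m (fq K m q) (i + 1) s • co K m q (i, s, t)) (by
      rintro ⟨j, a, b⟩
      simp only [LinearMap.comp_apply, LinearMap.mulLeft_apply, Y_mon, co_mon, Prod.mk.injEq,
        add_left_inj, map_smul, LinearMap.smul_apply, smul_eq_mul]
      split_ifs with h
      · obtain ⟨rfl, rfl, rfl⟩ := h
        rfl
      · simp)
  exact LinearMap.congr_fun this z
theorem co_YR (i : ZMod m) (s t : ℕ) (z : ExtAlg K m q) :
    co K m q (i, s, t + 1) (z * Y K m q) = co K m q (i, s, t) z := by
  have := lin_ext K m q ((co K m q (i, s, t + 1)).comp (LinearMap.mulRight K (Y K m q)))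
    (co K m q (i, s, t)) (by
      rintro ⟨j, a, b⟩
      simp only [LinearMap.comp_apply, LinearMap.mulRight_apply, mon_Y, co_mon, Prod.mk.injEq,
        add_left_inj])
  exact LinearMap.congr_fun this z

theorem gam_eq (i : ZMod m) (s : ℕ) : gam K m q i s = 𝐞 i * X K m q ^ s := by
  induction s generalizing i with
  | zero => simp [gam]
  | succ s ih =>
    rw [gam, ih, ← mul_assoc, a_e, ← eX, mul_assoc, ← pow_succ']
theorem del_eq (i : ZMod m) (s : ℕ) : del K m q i s = Y K m q ^ s * 𝐞 i := by
  induction s generalizing i with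
  | zero => simp [del]
  | succ s ih =>
    rw [del, ih, ← eYp, ← mul_assoc, b_e, ← Ye, mul_assoc, eYp, ← mul_assoc, pow_succ']

theorem homog_Xp (s : ℕ) : Homog K m q s (X K m q ^ s) := by
  unfold Homog
  have : X K m q ^ s = ∑ i, gam K m q i s * del K m q (i + s) 0 := by
    simp only [gam_eq, del_eq, pow_zero, one_mul, eXp, mul_assoc, e_idem]
    simp only [← eXp, ← Finset.sum_mul, e_total, one_mul]
  rw [this]
  refine Submodule.sum_mem _ fun i _ => Submodule.subset_span ⟨i, i + s, s, 0, by simp, rfl⟩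
theorem homog_Yp (s : ℕ) : Homog K m q s (Y K m q ^ s) := by
  unfold Homog
  have : Y K m q ^ s = ∑ i : ZMod m, gam K m q (i + s) 0 * del K m q i s := by
    simp only [gam_eq, del_eq, pow_zero, mul_one, ← eYp]
    simp only [← mul_assoc, e_idem]
    simp only [eYp, ← Finset.mul_sum, e_total, mul_one]
  rw [this]
  refine Submodule.sum_mem _ fun i _ => Submodule.subset_span ⟨i + s, i, 0, s, by simp, rfl⟩

theorem co_zero (hζ : ∀ n : ℕ, 1 ≤ n → (∏ i : ZMod m, q i) ^ n ≠ 1) (ε : K) (hε : ε ^ 2 = 1)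
    (z : ExtAlg K m q) (hX : z * X K m q = ε • (X K m q * z)) (hY : z * Y K m q = ε • (Y K m q * z))
    (i : ZMod m) (s t : ℕ) (hst : s ≠ 0 ∨ t ≠ 0) : co K m q (i, s, t) z = 0 := by
  have hP : (∏ j : ZMod m, fq K m q j) ^ 2 = ((∏ i : ZMod m, q i) ^ 2)⁻¹ := by
    rw [← inv_pow, ← Finset.prod_inv_distrib, ← Finset.prod_pow, ← Finset.prod_pow]
    simp [fq]
  have hR : (∏ j : ZMod m, fr K m q j) = ∏ j : ZMod m, fq K m q j :=
    Equiv.prod_comp (Equiv.neg (ZMod m)) (fq K m q)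
  have fin : ∀ r : ℕ, r ≠ 0 → ∀ c : K,
      c = (ε ^ m * (∏ j : ZMod m, fq K m q j) ^ r) * c → c = 0 := by
    intro r hr c hc
    by_contra h0
    have h1 : (ε ^ m * (∏ j : ZMod m, fq K m q j) ^ r) = 1 := by
      have : (ε ^ m * (∏ j : ZMod m, fq K m q j) ^ r) * c = 1 * c := by rw [← hc, one_mul]
      exact mul_right_cancel₀ h0 this
    have h2 : (ε ^ m * (∏ j : ZMod m, fq K m q j) ^ r) ^ 2 = 1 := by rw [h1, one_pow]
    rw [mul_pow, ← pow_mul, mul_comm m, pow_mul, hε, one_pow, one_mul, ← pow_mul, mul_comm r,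
      pow_mul, hP, inv_pow, inv_eq_one, ← pow_mul] at h2
    exact hζ (2 * r) (by omega) h2
  rcases hst with hs | ht
  · refine fin s hs _ ?_
    have := round K m (fun i => co K m q (i, s, t) z)
      (fun i => ε * cyc K m (fq K m q) (i + 1) s) (by
        intro i
        have h := congrArg (co K m q (i + 1, s, t + 1)) hY
        rw [co_YR, map_smul, co_YL, smul_eq_mul] at h
        simp only [h]
        ring) i
    have h6 : ∏ i : ZMod m, cyc K m (fq K m q) (i + 1) s = ∏ i : ZMod m, cyc K m (fq K m q) i s :=
      Equiv.prod_comp (Equiv.addRight (1 : ZMod m)) (fun i => cyc K m (fq K m q) i s)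
    rw [Finset.prod_mul_distrib, Finset.prod_const, Finset.card_univ, ZMod.card, h6,
      prod_cyc] at this
    exact this
  · refine fin t ht _ ?_
    have := round K m (fun i => co K m q (i, s, t) z)
      (fun i => ε * cyc K m (fr K m q) (-(i + s)) t) (by
        intro i
        have h := congrArg (co K m q (i, s + 1, t)) hX
        rw [co_XR, map_smul, co_XL, smul_eq_mul] at h
        rw [mul_assoc, h, ← mul_assoc, ← sq, hε, one_mul]) i
    have h6 : ∏ i : ZMod m, cyc K m (fr K m q) (-(i + s)) t
        = ∏ i : ZMod m, cyc K m (fr K m q) i t :=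
      Equiv.prod_comp ((Equiv.addRight (s : ZMod m)).trans (Equiv.neg _))
        (fun i => cyc K m (fr K m q) i t)
    rw [Finset.prod_mul_distrib, Finset.prod_const, Finset.card_univ, ZMod.card, h6, prod_cyc,
      hR] at this
    exact this

/-- the degree zero part -/
def E0 : Subalgebra K (ExtAlg K m q) :=
  (Submodule.span K (Set.range (xe K m q))).toSubalgebra
    (by
      rw [← e_total K m q]
      exact Submodule.sum_mem _ fun i _ => Submodule.subset_span ⟨i, rfl⟩)
    (by
      intro x y hx hy
      have := Submodule.mul_mem_mul hx hy
      rw [Submodule.span_mul_span] at this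
      refine Submodule.span_le.2 ?_ this
      rintro _ ⟨_, ⟨i, rfl⟩, _, ⟨j, rfl⟩, rfl⟩
      by_cases h : i = j
      · subst h
        exact Submodule.subset_span ⟨i, (e_idem K m q i).symm⟩
      · change 𝐞 i * 𝐞 j ∈ _
        rw [e_orth K m q i j h]
        exact Submodule.zero_mem _)

theorem ZGr_le (hζ : ∀ n : ℕ, 1 ≤ n → (∏ i : ZMod m, q i) ^ n ≠ 1) : ZGr K m q ≤ E0 K m q := by
  refine Algebra.adjoin_le ?_
  rintro z ⟨n, -, hz⟩
  have hX := hz 1 (X K m q) (by simpa using homog_Xp K m q 1)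
  have hY := hz 1 (Y K m q) (by simpa using homog_Yp K m q 1)
  have hc := co_zero K m q hζ _ (by rw [← pow_mul, mul_comm, pow_mul]; simp) z hX hY
  change z ∈ Submodule.span K (Set.range (xe K m q))
  rw [← psi_phi K m q z]
  unfold psi
  rw [Finsupp.linearCombination_apply]
  refine Submodule.sum_mem _ ?_
  rintro ⟨i, s, t⟩ hp
  have : s = 0 ∧ t = 0 := by
    by_contra hne
    exact Finsupp.mem_support_iff.1 hp (hc i s t (by tauto))
  obtain ⟨rfl, rfl⟩ := this
  refine Submodule.smul_mem _ _ (Submodule.subset_span ⟨i, ?_⟩)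
  simp [mon]

theorem not_fin : ¬ Module.Finite K (ExtAlg K m q) := by
  intro h
  have : Module.Finite K (V K m) :=
    Module.Finite.of_surjective (phi K m q) (fun v => ⟨_, phi_psi K m q v⟩)
  have := Module.Finite.finite_basis (Finsupp.basisSingleOne (R := K) (ι := ZMod m × ℕ × ℕ))
  exact not_finite (ZMod m × ℕ × ℕ)

theorem forward (h : ∃ (n : ℕ) (g : Fin n → ExtAlg K m q),
        ∀ x : ExtAlg K m q, ∃ c : Fin n → ExtAlg K m q,
          (∀ i, c i ∈ ZGr K m q) ∧ x = ∑ i, c i * g i) :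
      ∃ n : ℕ, 1 ≤ n ∧ (∏ i : ZMod m, q i) ^ n = 1 := by
  by_contra! hζ
  obtain ⟨n, g, hg⟩ := h
  apply not_fin K m q
  refine ⟨?_⟩
  have htop : (⊤ : Submodule K (ExtAlg K m q)) =
      Submodule.span K (Set.range (xe K m q)) * Submodule.span K (Set.range g) := by
    symm
    rw [eq_top_iff]
    intro x _
    obtain ⟨c, hc, rfl⟩ := hg x
    refine Submodule.sum_mem _ fun i _ => Submodule.mul_mem_mul ?_ (Submodule.subset_span ⟨i, rfl⟩)
    exact ZGr_le K m q hζ (hc i)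
  rw [htop]
  exact (Submodule.fg_span (Set.finite_range _)).mul (Submodule.fg_span (Set.finite_range _))

theorem comm_all (z : ExtAlg K m q) (he : ∀ i, z * 𝐞 i = 𝐞 i * z)
    (hX : z * X K m q = X K m q * z) (hY : z * Y K m q = Y K m q * z) (w : ExtAlg K m q) :
    z * w = w * z := by
  have : LinearMap.mulLeft K z = LinearMap.mulRight K z := by
    refine LinearMap.ext_on_range (span_mon K m q) ?_
    rintro ⟨i, s, t⟩
    have h1 : Commute z (𝐞 i) := he i
    have h2 : Commute z (X K m q) := hX
    have h3 : Commute z (Y K m q) := hY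
    exact h1.mul_right ((h2.pow_right s).mul_right (h3.pow_right t))
  exact LinearMap.congr_fun this w

theorem one_ext {x y : ExtAlg K m q} (h : ∀ i, 𝐞 i * x = 𝐞 i * y) : x = y := by
  rw [← one_mul x, ← one_mul y, ← e_total K m q, Finset.sum_mul, Finset.sum_mul]
  exact Finset.sum_congr rfl fun i _ => h i

theorem backward (h : ∃ n : ℕ, 1 ≤ n ∧ (∏ i : ZMod m, q i) ^ n = 1) :
    ∃ (n : ℕ) (g : Fin n → ExtAlg K m q),
        ∀ x : ExtAlg K m q, ∃ c : Fin n → ExtAlg K m q,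
          (∀ i, c i ∈ ZGr K m q) ∧ x = ∑ i, c i * g i := by
  obtain ⟨n, hn, hζ⟩ := h
  have hP : (∏ j : ZMod m, fq K m q j) ^ (2 * n) = 1 := by
    have : (∏ j : ZMod m, fq K m q j) ^ 2 = ((∏ i : ZMod m, q i) ^ 2)⁻¹ := by
      rw [← inv_pow, ← Finset.prod_inv_distrib, ← Finset.prod_pow, ← Finset.prod_pow]
      simp [fq]
    rw [pow_mul, this, inv_pow, ← pow_mul, mul_comm, pow_mul, hζ]
    simp
  have hR : (∏ j : ZMod m, fr K m q j) = ∏ j : ZMod m, fq K m q j :=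
    Equiv.prod_comp (Equiv.neg (ZMod m)) (fq K m q)
  obtain ⟨N, hN⟩ : ∃ N, N = m * (2 * n) := ⟨_, rfl⟩
  have hN0 : 0 < N := by
    rw [hN]
    have := NeZero.pos m
    positivity
  have hNm : (N : ZMod m) = 0 := by rw [hN]; simp
  have hNe : Even N := by rw [hN]; exact ⟨m * n, by ring⟩
  have hXc : ∀ w, X K m q ^ N * w = w * X K m q ^ N := by
    apply comm_all
    · intro i
      rw [eXp, hNm, add_zero]
    · rw [← pow_succ, ← pow_succ']
    · apply one_ext K m q
      intro i
      rw [eYXp, hN, cyc_mul, hP, one_smul]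
  have hYc : ∀ w, Y K m q ^ N * w = w * Y K m q ^ N := by
    apply comm_all
    · intro i
      rw [← eYp, hNm, add_zero]
    · apply one_ext K m q
      intro i
      rw [eYpX, hN, cyc_mul, hR, hP, one_smul]
    · rw [← pow_succ, ← pow_succ']
  have hXZ : X K m q ^ N ∈ ZGr K m q := by
    refine Algebra.subset_adjoin ⟨N, homog_Xp K m q N, fun n' g _ => ?_⟩
    rw [(hNe.mul_right n').neg_one_pow, one_smul, hXc]
  have hYZ : Y K m q ^ N ∈ ZGr K m q := by
    refine Algebra.subset_adjoin ⟨N, homog_Yp K m q N, fun n' g _ => ?_⟩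
    rw [(hNe.mul_right n').neg_one_pow, one_smul, hYc]
  let g : ZMod m × Fin N × Fin N → ExtAlg K m q := fun p => mon K m q (p.1, p.2.1, p.2.2)
  have hspan : ∀ x, x ∈ Submodule.span (ZGr K m q) (Set.range g) := by
    intro x
    have hx : x ∈ Submodule.span K (Set.range (mon K m q)) := by rw [span_mon]; trivial
    have hle : Submodule.span K (Set.range (mon K m q)) ≤
        (Submodule.span (ZGr K m q) (Set.range g)).restrictScalars K := by
      rw [Submodule.span_le]
      rintro _ ⟨⟨i, s, t⟩, rfl⟩
      change mon K m q (i, s, t) ∈ Submodule.span (ZGr K m q) (Set.range g)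
      have hmem : ((X K m q ^ N) ^ (s / N) * (Y K m q ^ N) ^ (t / N)) ∈ ZGr K m q :=
        (ZGr K m q).mul_mem ((ZGr K m q).pow_mem hXZ _) ((ZGr K m q).pow_mem hYZ _)
      have heq : mon K m q (i, s, t) =
          (⟨_, hmem⟩ : ZGr K m q) • g (i, ⟨s % N, Nat.mod_lt _ hN0⟩, ⟨t % N, Nat.mod_lt _ hN0⟩) := by
        rw [Subalgebra.smul_def, smul_eq_mul]
        change _ = (X K m q ^ N) ^ (s / N) * (Y K m q ^ N) ^ (t / N) *
          (𝐞 i * (X K m q ^ (s % N) * Y K m q ^ (t % N)))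
        have c1 : ∀ w, Commute ((X K m q ^ N) ^ (s / N)) w := fun w =>
          Commute.pow_left (hXc w) _
        have c2 : ∀ w, Commute ((Y K m q ^ N) ^ (t / N)) w := fun w =>
          Commute.pow_left (hYc w) _
        unfold mon
        dsimp only
        conv_lhs => rw [← Nat.div_add_mod s N, ← Nat.div_add_mod t N, pow_add, pow_add, pow_mul,
          pow_mul]
        rw [mul_assoc ((X K m q ^ N) ^ (s / N)) ((Y K m q ^ N) ^ (t / N)),
          (c2 (𝐞 i)).left_comm, (c2 (X K m q ^ (s % N))).left_comm, (c1 (𝐞 i)).left_comm,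
          mul_assoc ((X K m q ^ N) ^ (s / N)) (X K m q ^ (s % N))]
      rw [heq]
      exact Submodule.smul_mem _ _ (Submodule.subset_span ⟨_, rfl⟩)
    exact hle hx
  let σ := Fintype.equivFin (ZMod m × Fin N × Fin N)
  refine ⟨_, g ∘ σ.symm, fun x => ?_⟩
  have hx := hspan x
  rw [Submodule.mem_span_range_iff_exists_fun] at hx
  obtain ⟨c, hc⟩ := hx
  refine ⟨fun i => (c (σ.symm i) : ExtAlg K m q), fun i => (c _).2, ?_⟩
  rw [← hc]
  exact (Equiv.sum_comp σ.symm (fun p => c p • g p)).symm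

end rep
end ExtFin

/-- `E(Λ_q)` is finitely generated as a module over its subalgebra
`Z_gr(E(Λ_q))` if and only if `ζ = q_0 q_1 ⋯ q_{m-1}` is a root of unity. -/
theorem ext_algebra_finite_over_graded_centre_iff
    (K : Type) [Field K] (m : ℕ) [NeZero m] (hm : 1 ≤ m)
    (q : ZMod m → K) (hq : ∀ i, q i ≠ 0) :
    (∃ (n : ℕ) (g : Fin n → ExtAlg K m q),
        ∀ x : ExtAlg K m q, ∃ c : Fin n → ExtAlg K m q,
          (∀ i, c i ∈ ZGr K m q) ∧ x = ∑ i, c i * g i) ↔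
      ∃ n : ℕ, 1 ≤ n ∧ (∏ i : ZMod m, q i) ^ n = 1 := by
  exact ⟨ExtFin.forward K m q, ExtFin.backward K m q⟩
end
end

section
/- Let m ≥ 4 and b_1, b_2, t ∈ K with t b_2 ≠ 0. Then dim_K soc(Λ̃) ≥ 2m, and Λ̃/soc(Λ̃) is not isomorphic to Λ/soc(Λ) as a K-algebra; that is, Λ̃ is not a socle deformation of Λ. -/
open scoped BigOperators

noncomputable section

/-- The relations defining `Λ_q`: `a_i a_{i+1} = 0`, `ā_{i-1} ā_{i-2} = 0` and
`q_i a_i ā_i - ā_{i-1} a_{i-1} = 0`. -/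
inductive LamRel (K : Type) [Field K] (m : ℕ) [NeZero m] (q : ZMod m → K) :
    PathAlg K m → PathAlg K m → Prop
  | row : ∀ i : ZMod m, LamRel K m q (pa K m i * pa K m (i + 1)) 0
  | col : ∀ i : ZMod m, LamRel K m q (pb K m (i - 1) * pb K m (i - 2)) 0
  | comm : ∀ i : ZMod m,
      LamRel K m q (q i • (pa K m i * pb K m i) - pb K m (i - 1) * pa K m (i - 1)) 0

/-- The algebra `Λ_q`. -/
abbrev Lam (K : Type) [Field K] (m : ℕ) [NeZero m] (q : ZMod m → K) : Type :=
  RingQuot (LamRel K m q)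

def lamE (K : Type) [Field K] (m : ℕ) [NeZero m] (q : ZMod m → K) (i : ZMod m) :
    Lam K m q := RingQuot.mkAlgHom K (LamRel K m q) (pe K m i)
def lamA (K : Type) [Field K] (m : ℕ) [NeZero m] (q : ZMod m → K) (i : ZMod m) :
    Lam K m q := RingQuot.mkAlgHom K (LamRel K m q) (pa K m i)
def lamB (K : Type) [Field K] (m : ℕ) [NeZero m] (q : ZMod m → K) (i : ZMod m) :
    Lam K m q := RingQuot.mkAlgHom K (LamRel K m q) (pb K m i)

/-- The socle of a ring `R` as a left module over itself: the sum of all its simple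
(= atomic) left submodules. -/
def socAlg (R : Type) [Ring R] : Submodule R R := sSup {S : Submodule R R | IsAtom S}

/-- The quotient of a `K`-algebra `R` by (the two-sided ideal generated by) its left socle. -/
abbrev socQuot (K : Type) [Field K] (R : Type) [Ring R] [Algebra K R] : Type :=
  RingQuot (fun x y : R => x - y ∈ socAlg R)

/-- The relations defining the deformed algebra `Λ̃` associated with scalars `b₁, b₂, t`. -/
inductive TildeRel (K : Type) [Field K] (m : ℕ) [NeZero m] (b1 b2 t : K) :
    PathAlg K m → PathAlg K m → Prop
  | row : ∀ i : ZMod m, TildeRel K m b1 b2 t (pa K m i * pa K m (i + 1)) 0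
  | col : ∀ i : ZMod m, TildeRel K m b1 b2 t (pb K m (i - 1) * pb K m (i - 2)) 0
  | comm : ∀ j : ZMod m, j ≠ 0 →
      TildeRel K m b1 b2 t
        (pa K m j * pb K m j - pb K m (j - 1) * pa K m (j - 1)
          - (t * (-1 : K) ^ (j.val) * b2) • pe K m j) 0
  | comm0 : TildeRel K m b1 b2 t
        ((1 - t * b1) • (pa K m 0 * pb K m 0) - pb K m (-1) * pa K m (-1)
          - (t * b2) • pe K m 0) 0

/-- The deformed algebra `Λ̃`. -/
abbrev Tilde (K : Type) [Field K] (m : ℕ) [NeZero m] (b1 b2 t : K) : Type :=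
  RingQuot (TildeRel K m b1 b2 t)

def tE (K : Type) [Field K] (m : ℕ) [NeZero m] (b1 b2 t : K) (i : ZMod m) :
    Tilde K m b1 b2 t := RingQuot.mkAlgHom K (TildeRel K m b1 b2 t) (pe K m i)
def tA (K : Type) [Field K] (m : ℕ) [NeZero m] (b1 b2 t : K) (i : ZMod m) :
    Tilde K m b1 b2 t := RingQuot.mkAlgHom K (TildeRel K m b1 b2 t) (pa K m i)
def tB (K : Type) [Field K] (m : ℕ) [NeZero m] (b1 b2 t : K) (i : ZMod m) :
    Tilde K m b1 b2 t := RingQuot.mkAlgHom K (TildeRel K m b1 b2 t) (pb K m i)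


section Helpers

variable {K : Type} [Field K] {m : ℕ} [NeZero m]

/-- Relations of the path algebra, as equations. -/
theorem pe_orth (i j : ZMod m) (h : i ≠ j) : pe K m i * pe K m j = 0 := by
  have := RingQuot.mkAlgHom_rel K (PathRel.orth (K := K) i j h)
  simpa [pe] using this

theorem pe_idem (i : ZMod m) : pe K m i * pe K m i = pe K m i := by
  have := RingQuot.mkAlgHom_rel K (PathRel.idem (K := K) i)
  simpa [pe] using this

theorem pe_total : ∑ i : ZMod m, pe K m i = 1 := by
  have := RingQuot.mkAlgHom_rel K (PathRel.total (K := K) (m := m))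
  simpa [pe, map_sum] using this

theorem pa_src (i : ZMod m) : pe K m i * pa K m i = pa K m i := by
  have := RingQuot.mkAlgHom_rel K (PathRel.asrc (K := K) i)
  simpa [pe, pa] using this

theorem pa_tgt (i : ZMod m) : pa K m i * pe K m (i + 1) = pa K m i := by
  have := RingQuot.mkAlgHom_rel K (PathRel.atgt (K := K) i)
  simpa [pe, pa] using this

theorem pb_src (i : ZMod m) : pe K m (i + 1) * pb K m i = pb K m i := by
  have := RingQuot.mkAlgHom_rel K (PathRel.bsrc (K := K) i)
  simpa [pe, pb] using this

theorem pb_tgt (i : ZMod m) : pb K m i * pe K m i = pb K m i := by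
  have := RingQuot.mkAlgHom_rel K (PathRel.btgt (K := K) i)
  simpa [pe, pb] using this

/-- A subalgebra of a quotient of the path algebra containing the generators is everything. -/
theorem gen_top {R : Type} [Ring R] [Algebra K R] (f : PathAlg K m →ₐ[K] R)
    (hf : Function.Surjective f) (S : Subalgebra K R)
    (he : ∀ i, f (pe K m i) ∈ S) (ha : ∀ i, f (pa K m i) ∈ S) (hb : ∀ i, f (pb K m i) ∈ S)
    (r : R) : r ∈ S := by
  obtain ⟨p, rfl⟩ := hf r
  obtain ⟨x, rfl⟩ := RingQuot.mkAlgHom_surjective K (PathRel K m) p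
  induction x using FreeAlgebra.induction with
  | grade0 c => simp only [AlgHom.commutes]; exact S.algebraMap_mem c
  | grade1 g =>
    cases g with
    | e i => exact he i
    | a i => exact ha i
    | abar i => exact hb i
  | mul x y hx hy => simpa using S.mul_mem hx hy
  | add x y hx hy => simpa using S.add_mem hx hy

/-- Values of the two-dimensional representation at the edge `k`. -/
def genRep (k : ZMod m) (d : K) : Gen m → Matrix (Fin 2) (Fin 2) K
  | Gen.e i => !![if i = k then 1 else 0, 0; 0, if i = k + 1 then 1 else 0]
  | Gen.a i => !![0, if i = k then 1 else 0; 0, 0]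
  | Gen.abar i => !![0, 0; if i = k then d else 0, 0]

/-- The two-dimensional representation of the path algebra at the edge `k`. -/
def pathRep (k : ZMod m) (d : K) : PathAlg K m →ₐ[K] Matrix (Fin 2) (Fin 2) K :=
  RingQuot.liftAlgHom K ⟨FreeAlgebra.lift K (genRep k d), by
    intro x y h
    cases h with
    | orth i j h =>
      simp only [Ee, map_mul, FreeAlgebra.lift_ι_apply, genRep, map_zero, Matrix.mul_fin_two]
      ext p q
      have h1 : j = k → i ≠ k := fun h1 h2 => h (h2.trans h1.symm)
      have h2 : j = k + 1 → i ≠ k + 1 := fun h1 h2 => h (h2.trans h1.symm)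
      fin_cases p <;> fin_cases q <;> simp <;> assumption
    | idem i =>
      simp only [Ee, map_mul, FreeAlgebra.lift_ι_apply, genRep, Matrix.mul_fin_two]
      ext p q
      fin_cases p <;> fin_cases q <;> simp
    | total =>
      simp only [Ee, map_sum, FreeAlgebra.lift_ι_apply, genRep, map_one]
      ext p q
      fin_cases p <;> fin_cases q <;> simp [Matrix.sum_apply]
    | asrc i =>
      simp only [Ee, Aa, map_mul, FreeAlgebra.lift_ι_apply, genRep, Matrix.mul_fin_two]
      ext p q
      fin_cases p <;> fin_cases q <;> simp
    | atgt i =>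
      simp only [Ee, Aa, map_mul, FreeAlgebra.lift_ι_apply, genRep, Matrix.mul_fin_two]
      ext p q
      fin_cases p <;> fin_cases q <;> simp
    | bsrc i =>
      simp only [Ee, Bb, map_mul, FreeAlgebra.lift_ι_apply, genRep, Matrix.mul_fin_two]
      ext p q
      fin_cases p <;> fin_cases q <;> simp
      exact fun a b => absurd b a
    | btgt i =>
      simp only [Ee, Bb, map_mul, FreeAlgebra.lift_ι_apply, genRep, Matrix.mul_fin_two]
      ext p q
      fin_cases p <;> fin_cases q <;> simp
      exact fun a b => absurd b a⟩

theorem pathRep_e (k : ZMod m) (d : K) (i : ZMod m) : pathRep k d (pe K m i) =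
    !![if i = k then 1 else 0, 0; 0, if i = k + 1 then 1 else 0] := by
  simp [pathRep, pe, Ee, genRep]

theorem pathRep_a (k : ZMod m) (d : K) (i : ZMod m) : pathRep k d (pa K m i) =
    !![0, if i = k then 1 else 0; 0, 0] := by
  simp [pathRep, pa, Aa, genRep]

theorem pathRep_b (k : ZMod m) (d : K) (i : ZMod m) : pathRep k d (pb K m i) =
    !![0, 0; if i = k then d else 0, 0] := by
  simp [pathRep, pb, Bb, genRep]

/-- The scalars at the vertices. -/
def cc (b2 t : K) (j : ZMod m) : K := t * (-1 : K) ^ (j.val) * b2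

theorem cc_ne (b2 t : K) (h : t * b2 ≠ 0) (j : ZMod m) : cc b2 t j ≠ 0 := by
  have h1 : t ≠ 0 := left_ne_zero_of_mul h
  have h2 : b2 ≠ 0 := right_ne_zero_of_mul h
  simp [cc, h1, h2]

theorem cc_succ (b2 t : K) (k : ZMod m) (hk : k + 1 ≠ 0) :
    cc b2 t (k + 1) = - cc b2 t k := by
  have : (k + 1).val = k.val + 1 := by
    by_cases hm1 : m = 1
    · subst hm1
      exact absurd (Subsingleton.elim _ _) hk
    have h0 : (1 : ZMod m).val = 1 := ZMod.val_one'' hm1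
    rw [ZMod.val_add_of_lt, h0]
    rw [h0]
    have h1 := ZMod.val_lt k
    by_contra hlt
    apply hk
    have h2 : k.val + 1 = m := by omega
    have h3 : ((k.val + 1 : ℕ) : ZMod m) = 0 := by rw [h2]; simp
    simpa using h3
  simp only [cc, this, pow_succ]
  ring

/-- The representation of the deformed algebra at an edge not touching the vertex `0`. -/
def tildeRep (b1 b2 t : K) (k : ZMod m) (hk0 : k ≠ 0) (hk : k + 1 ≠ 0) :
    Tilde K m b1 b2 t →ₐ[K] Matrix (Fin 2) (Fin 2) K :=
  RingQuot.liftAlgHom K ⟨pathRep k (cc b2 t k), by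
    intro x y h
    have hs := cc_succ b2 t k hk
    cases h with
    | row i =>
      simp only [map_mul, pathRep_a, map_zero, Matrix.mul_fin_two]
      ext p q
      fin_cases p <;> fin_cases q <;> simp
    | col i =>
      simp only [map_mul, pathRep_b, map_zero, Matrix.mul_fin_two]
      ext p q
      fin_cases p <;> fin_cases q <;> simp
    | comm j hj =>
      change pathRep k (cc b2 t k) (pa K m j * pb K m j - pb K m (j - 1) * pa K m (j - 1)
          - (cc b2 t j) • pe K m j) = _
      simp only [map_mul, map_sub, map_smul, pathRep_a, pathRep_b, pathRep_e, map_zero, Matrix.mul_fin_two]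
      ext p q
      fin_cases p <;> fin_cases q <;> simp
      · split_ifs with h <;> simp [h]
      · simp only [sub_eq_iff_eq_add]
        split_ifs with h <;> simp [h, hs]
    | comm0 =>
      simp only [map_mul, map_sub, map_smul, pathRep_a, pathRep_b, pathRep_e, map_zero, Matrix.mul_fin_two]
      have h1 : ¬ (0 = k) := fun h => hk0 h.symm
      have h2 : ¬ (0 = k + 1) := fun h => hk h.symm
      have h3 : ¬ (-1 = k) := by rintro rfl; simp at hk
      ext p q
      fin_cases p <;> fin_cases q <;> simp [h1, h2, h3]⟩

theorem tildeRep_a (b1 b2 t : K) (k : ZMod m) (hk0 : k ≠ 0) (hk : k + 1 ≠ 0) (i : ZMod m) :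
    tildeRep b1 b2 t k hk0 hk (tA K m b1 b2 t i) = !![0, if i = k then 1 else 0; 0, 0] := by
  simp [tildeRep, tA, pathRep_a]

theorem tildeRep_b (b1 b2 t : K) (k : ZMod m) (hk0 : k ≠ 0) (hk : k + 1 ≠ 0) (i : ZMod m) :
    tildeRep b1 b2 t k hk0 hk (tB K m b1 b2 t i) =
      !![0, 0; if i = k then cc b2 t k else 0, 0] := by
  simp [tildeRep, tB, pathRep_b]

/-- The representation of `Λ` at the edge `0`, killing the backward arrows. -/
def lamRep : Lam K m (fun _ => 1) →ₐ[K] Matrix (Fin 2) (Fin 2) K :=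
  RingQuot.liftAlgHom K ⟨pathRep 0 0, by
    intro x y h
    cases h with
    | row i =>
      simp only [map_mul, pathRep_a, map_zero, Matrix.mul_fin_two]
      ext p q
      fin_cases p <;> fin_cases q <;> simp
    | col i =>
      simp only [map_mul, pathRep_b, map_zero, Matrix.mul_fin_two]
      ext p q
      fin_cases p <;> fin_cases q <;> simp
    | comm i =>
      simp only [map_mul, map_sub, map_smul, pathRep_a, pathRep_b, map_zero, Matrix.mul_fin_two]
      ext p q
      fin_cases p <;> fin_cases q <;> simp⟩

theorem lamRep_mk (x : PathAlg K m) :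
    lamRep (RingQuot.mkAlgHom K (LamRel K m (fun _ => 1)) x) = pathRep 0 0 x := by
  simp [lamRep]

theorem lamRep_low (x : Lam K m (fun _ => (1 : K))) : lamRep x 1 0 = 0 := by
  let S : Subalgebra K (Lam K m (fun _ => (1 : K))) :=
    { carrier := {x | lamRep x 1 0 = 0}
      mul_mem' := by
        intro x y hx hy
        simp only [Set.mem_ofPred_eq] at *
        simp [Matrix.mul_apply, Fin.sum_univ_two, hx, hy]
      add_mem' := by
        intro x y hx hy
        simp only [Set.mem_ofPred_eq] at *
        simp [hx, hy]
      algebraMap_mem' := by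
        intro r
        simp [Matrix.algebraMap_matrix_apply] }
  refine gen_top (RingQuot.mkAlgHom K (LamRel K m (fun _ => 1)))
    (RingQuot.mkAlgHom_surjective K _) S ?_ ?_ ?_ x
  · intro i
    change lamRep _ 1 0 = 0
    rw [lamRep_mk, pathRep_e]; simp
  · intro i
    change lamRep _ 1 0 = 0
    rw [lamRep_mk, pathRep_a]; simp
  · intro i
    change lamRep _ 1 0 = 0
    rw [lamRep_mk, pathRep_b]; simp

/-- The augmentation of `Λ` at the vertex `1`. -/
def lamEps : Lam K m (fun _ => (1 : K)) →ₐ[K] K :=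
  AlgHom.ofLinearMap
    { toFun := fun x => lamRep x 1 1
      map_add' := by intro x y; simp
      map_smul' := by intro r x; simp }
    (by simp)
    (by
      intro x y
      simp [Matrix.mul_apply, Fin.sum_univ_two, lamRep_low])

theorem lamEps_apply (x : Lam K m (fun _ => (1 : K))) : lamEps x = lamRep x 1 1 := rfl

theorem lamEps_soc (s : Lam K m (fun _ => (1 : K))) (hs : s ∈ socAlg (Lam K m (fun _ => (1 : K)))) :
    lamEps s = 0 := by
  have hle : socAlg (Lam K m (fun _ => (1 : K))) ≤
      RingHom.ker (lamEps (K := K) (m := m)) := by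
    refine sSup_le ?_
    intro S hS s hs
    rw [RingHom.mem_ker]
    by_contra hne
    set a := lamA K m (fun _ => (1 : K)) 0 with ha
    have haS : a * s ∈ S := S.smul_mem a hs
    have hra : lamRep a = !![0, 1; 0, 0] := by
      rw [ha, lamA, lamRep_mk, pathRep_a]; simp
    have hea : lamEps a = 0 := by rw [lamEps_apply, hra]; simp
    have hnz : a * s ≠ 0 := by
      intro h0
      have h1 : lamRep (a * s) 0 1 = 0 := by rw [h0]; simp
      rw [map_mul, hra, Matrix.mul_apply, Fin.sum_univ_two] at h1
      simp at h1
      exact hne h1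
    have hsp : Submodule.span (Lam K m (fun _ => (1 : K))) {a * s} = S := by
      rcases hS.le_iff.1 (Submodule.span_le.2 (Set.singleton_subset_iff.2 haS)) with h | h
      · exact absurd (Submodule.span_singleton_eq_bot.1 h) hnz
      · exact h
    rw [← hsp, Submodule.mem_span_singleton] at hs
    obtain ⟨r, hr⟩ := hs
    apply hne
    rw [← hr, smul_eq_mul, map_mul, map_mul, hea]
    simp
  exact (RingHom.mem_ker).1 (hle hs)

/-- The quotient of `Λ` by its socle is not the zero ring. -/
theorem lam_socQuot_one_ne : (1 : socQuot K (Lam K m (fun _ => (1 : K)))) ≠ 0 := by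
  intro h
  let f : socQuot K (Lam K m (fun _ => (1 : K))) →ₐ[K] K := RingQuot.liftAlgHom K ⟨lamEps, by
    intro x y hxy
    have := lamEps_soc _ hxy
    rwa [map_sub, sub_eq_zero] at this⟩
  have h1 := congrArg f h
  simp at h1

/-- A criterion for an element to lie in the socle. -/
theorem mem_soc {R : Type} [Ring R] [Algebra K R] (u w f g p : R) (d : K) (hd : d ≠ 0)
    (hfu : f * u = u) (hfw : f * w = 0) (hgu : g * u = 0) (hgw : g * w = w)
    (hp : p * w = d • u)
    (hcl : ∀ r : R, ∃ α β : K, r * u = α • u + β • w) : u ∈ socAlg R := by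
  by_cases hu : u = 0
  · rw [hu]; exact Submodule.zero_mem _
  have hat : IsAtom (Submodule.span R {u}) := by
    rw [isAtom_iff_le_of_ge]
    refine ⟨fun h => hu (Submodule.span_singleton_eq_bot.1 h), ?_⟩
    intro S hS hle
    rw [Submodule.span_le, Set.singleton_subset_iff]
    obtain ⟨z, hz, hz0⟩ := Submodule.exists_mem_ne_zero_of_ne_bot hS
    obtain ⟨r, hr⟩ := Submodule.mem_span_singleton.1 (hle hz)
    obtain ⟨α, β, hab⟩ := hcl r
    rw [smul_eq_mul, hab] at hr
    by_cases hα : α = 0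
    · have hβ : β ≠ 0 := by
        rintro rfl
        apply hz0
        rw [← hr, hα]; simp
      have hz2 : z = β • w := by rw [← hr, hα]; simp
      have h1 : ((β * d)⁻¹ • p) * z = u := by
        rw [hz2, mul_smul_comm, smul_mul_assoc, hp, smul_smul, smul_smul]
        rw [show β * (β * d)⁻¹ * d = 1 by field_simp, one_smul]
      rw [SetLike.mem_coe, ← h1]
      exact S.smul_mem _ hz
    · have h1 : (α⁻¹ • f) * z = u := by
        rw [← hr, smul_mul_assoc, mul_add, mul_smul_comm, mul_smul_comm, hfu, hfw]
        simp [smul_smul, hα]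
      rw [SetLike.mem_coe, ← h1]
      exact S.smul_mem _ hz
  exact (le_sSup (a := Submodule.span R {u}) hat) (Submodule.mem_span_singleton_self u)

variable (b1 b2 t : K)

theorem tE_orth (i j : ZMod m) (h : i ≠ j) : tE K m b1 b2 t i * tE K m b1 b2 t j = 0 := by
  rw [tE, tE, ← map_mul, pe_orth i j h, map_zero]

theorem tE_total : ∑ i : ZMod m, tE K m b1 b2 t i = 1 := by
  simp only [tE]
  rw [← map_sum, pe_total, map_one]

theorem tA_src (i : ZMod m) : tE K m b1 b2 t i * tA K m b1 b2 t i = tA K m b1 b2 t i := by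
  rw [tE, tA, ← map_mul, pa_src]

theorem tA_tgt (i : ZMod m) : tA K m b1 b2 t i * tE K m b1 b2 t (i + 1) = tA K m b1 b2 t i := by
  rw [tE, tA, ← map_mul, pa_tgt]

theorem tB_src (i : ZMod m) : tE K m b1 b2 t (i + 1) * tB K m b1 b2 t i = tB K m b1 b2 t i := by
  rw [tE, tB, ← map_mul, pb_src]

theorem tB_tgt (i : ZMod m) : tB K m b1 b2 t i * tE K m b1 b2 t i = tB K m b1 b2 t i := by
  rw [tE, tB, ← map_mul, pb_tgt]

theorem tEA (i j : ZMod m) (h : i ≠ j) : tE K m b1 b2 t i * tA K m b1 b2 t j = 0 := by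
  rw [← tA_src, ← mul_assoc, tE_orth _ _ _ _ _ h, zero_mul]

theorem tEB (i j : ZMod m) (h : i ≠ j + 1) : tE K m b1 b2 t i * tB K m b1 b2 t j = 0 := by
  rw [← tB_src, ← mul_assoc, tE_orth _ _ _ _ _ h, zero_mul]

theorem tAA (i j : ZMod m) : tA K m b1 b2 t i * tA K m b1 b2 t j = 0 := by
  by_cases h : i + 1 = j
  · subst h
    have := RingQuot.mkAlgHom_rel K (TildeRel.row (b1 := b1) (b2 := b2) (t := t) i)
    simpa [tA] using this
  · rw [← tA_tgt, mul_assoc, tEA _ _ _ _ _ h, mul_zero]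

theorem tBB (i j : ZMod m) : tB K m b1 b2 t i * tB K m b1 b2 t j = 0 := by
  by_cases h : i = j + 1
  · subst h
    have := RingQuot.mkAlgHom_rel K (TildeRel.col (b1 := b1) (b2 := b2) (t := t) (j + 2))
    rw [show j + 2 - 1 = j + 1 by ring, show j + 2 - 2 = j by ring] at this
    simpa [tB] using this
  · rw [← tB_tgt, mul_assoc, tEB _ _ _ _ _ h, mul_zero]

theorem tAB (i j : ZMod m) (h : i ≠ j) : tA K m b1 b2 t i * tB K m b1 b2 t j = 0 := by
  rw [← tA_tgt, mul_assoc, tEB _ _ _ _ _ (fun h' => h (add_right_cancel h')), mul_zero]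

theorem tBA (i j : ZMod m) (h : i ≠ j) : tB K m b1 b2 t i * tA K m b1 b2 t j = 0 := by
  rw [← tB_tgt, mul_assoc, tEA _ _ _ _ _ h, mul_zero]

theorem t_comm (j : ZMod m) (hj : j ≠ 0) :
    tA K m b1 b2 t j * tB K m b1 b2 t j =
      tB K m b1 b2 t (j - 1) * tA K m b1 b2 t (j - 1) + cc b2 t j • tE K m b1 b2 t j := by
  have := RingQuot.mkAlgHom_rel K (TildeRel.comm (b1 := b1) (b2 := b2) (t := t) j hj)
  rw [map_sub, map_sub, map_mul, map_mul, map_smul, map_zero, sub_sub, sub_eq_zero] at this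
  exact this

theorem t_comm0 :
    (1 - t * b1) • (tA K m b1 b2 t 0 * tB K m b1 b2 t 0) =
      tB K m b1 b2 t (-1) * tA K m b1 b2 t (-1) + (t * b2) • tE K m b1 b2 t 0 := by
  have := RingQuot.mkAlgHom_rel K (TildeRel.comm0 (m := m) (b1 := b1) (b2 := b2) (t := t))
  rw [map_sub, map_sub, map_smul, map_mul, map_mul, map_smul, map_zero, sub_sub, sub_eq_zero]
    at this
  exact this

theorem t_comm' (j : ZMod m) (hj : j + 1 ≠ 0) :
    tA K m b1 b2 t (j + 1) * tB K m b1 b2 t (j + 1) =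
      tB K m b1 b2 t j * tA K m b1 b2 t j + cc b2 t (j + 1) • tE K m b1 b2 t (j + 1) := by
  have := t_comm b1 b2 t (j + 1) hj
  rwa [add_sub_cancel_right] at this

theorem ring_aux1 {R : Type} [Ring R] [Algebra K R] {x y e a : R} {c : K}
    (h : x = y + c • e) (hx : a * x = 0) (he : a * e = a) : a * y = (-c) • a := by
  rw [h, mul_add, mul_smul_comm, he] at hx
  rw [neg_smul]
  exact eq_neg_of_add_eq_zero_left hx

theorem ring_aux2 {R : Type} [Ring R] [Algebra K R] {x y e a : R} {c : K}
    (h : x = y + c • e) (hx : x * a = 0) (he : e * a = a) : y * a = (-c) • a := by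
  rw [h, add_mul, smul_mul_assoc, he] at hx
  rw [neg_smul]
  exact eq_neg_of_add_eq_zero_left hx

theorem ring_aux3 {R : Type} [Ring R] [Algebra K R] {x y e : R} {c : K} (I : Submodule R R)
    (h : x = y + c • e) (hx : x ∈ I) (hy : y ∈ I) : c • e ∈ I := by
  have : c • e = x - y := by rw [h]; abel
  rw [this]
  exact I.sub_mem hx hy

theorem tABA (h : t * b2 ≠ 0) (h1 : (1 : ZMod m) ≠ 0) (j : ZMod m) : ∃ d : K, d ≠ 0 ∧
    tA K m b1 b2 t j * (tB K m b1 b2 t j * tA K m b1 b2 t j) = d • tA K m b1 b2 t j := by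
  by_cases hj : j = 0
  · have hj1 : j + 1 ≠ 0 := by rw [hj, zero_add]; exact h1
    refine ⟨- cc b2 t (j + 1), neg_ne_zero.2 (cc_ne b2 t h _), ?_⟩
    have hx : tA K m b1 b2 t j * (tA K m b1 b2 t (j + 1) * tB K m b1 b2 t (j + 1)) = 0 := by
      rw [← mul_assoc, tAA, zero_mul]
    exact ring_aux1 (R := Tilde K m b1 b2 t) (t_comm' b1 b2 t j hj1) hx
      (tA_tgt b1 b2 t j)
  · refine ⟨cc b2 t j, cc_ne b2 t h _, ?_⟩
    rw [← mul_assoc, t_comm b1 b2 t j hj, add_mul, mul_assoc, tAA, mul_zero, zero_add,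
      smul_mul_assoc, tA_src]

theorem tBAB (h : t * b2 ≠ 0) (h1 : (1 : ZMod m) ≠ 0) (j : ZMod m) : ∃ d : K, d ≠ 0 ∧
    tB K m b1 b2 t j * (tA K m b1 b2 t j * tB K m b1 b2 t j) = d • tB K m b1 b2 t j := by
  by_cases hj : j = 0
  · have hj1 : j + 1 ≠ 0 := by rw [hj, zero_add]; exact h1
    refine ⟨- cc b2 t (j + 1), neg_ne_zero.2 (cc_ne b2 t h _), ?_⟩
    rw [← mul_assoc]
    have hx : tA K m b1 b2 t (j + 1) * tB K m b1 b2 t (j + 1) * tB K m b1 b2 t j = 0 := by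
      rw [mul_assoc, tBB, mul_zero]
    exact ring_aux2 (R := Tilde K m b1 b2 t) (t_comm' b1 b2 t j hj1) hx
      (tB_src b1 b2 t j)
  · refine ⟨cc b2 t j, cc_ne b2 t h _, ?_⟩
    rw [t_comm b1 b2 t j hj, mul_add, ← mul_assoc, tBB, zero_mul, zero_add,
      mul_smul_comm, tB_tgt]

/-- Closure of the plane spanned by `u` and `w` under left multiplication. -/
theorem t_closed (u w : Tilde K m b1 b2 t)
    (hu : ∀ r : PathAlg K m, (∃ i, r = pe K m i ∨ r = pa K m i ∨ r = pb K m i) →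
      ∀ z : Tilde K m b1 b2 t, z = u ∨ z = w →
      RingQuot.mkAlgHom K (TildeRel K m b1 b2 t) r * z ∈ Submodule.span K {u, w})
    (r : Tilde K m b1 b2 t) : ∃ α β : K, r * u = α • u + β • w := by
  let W : Submodule K (Tilde K m b1 b2 t) := Submodule.span K {u, w}
  let S : Subalgebra K (Tilde K m b1 b2 t) :=
    { carrier := {r | ∀ z ∈ W, r * z ∈ W}
      mul_mem' := by
        intro x y hx hy z hz
        rw [mul_assoc]
        exact hx _ (hy _ hz)
      add_mem' := by
        intro x y hx hy z hz
        rw [add_mul]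
        exact W.add_mem (hx _ hz) (hy _ hz)
      algebraMap_mem' := by
        intro c z hz
        rw [← Algebra.smul_def]
        exact W.smul_mem _ hz }
  have key : ∀ r : PathAlg K m, (∃ i, r = pe K m i ∨ r = pa K m i ∨ r = pb K m i) →
      RingQuot.mkAlgHom K (TildeRel K m b1 b2 t) r ∈ S := by
    intro r hr z hz
    induction hz using Submodule.span_induction with
    | mem z hz => exact hu r hr z (by simpa using hz)
    | zero => rw [mul_zero]; exact W.zero_mem
    | add x y _ _ hx hy => rw [mul_add]; exact W.add_mem hx hy
    | smul c x _ hx => rw [mul_smul_comm]; exact W.smul_mem _ hx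
  have hr : r ∈ S := gen_top (RingQuot.mkAlgHom K (TildeRel K m b1 b2 t))
    (RingQuot.mkAlgHom_surjective K _) S (fun i => key _ ⟨i, Or.inl rfl⟩)
    (fun i => key _ ⟨i, Or.inr (Or.inl rfl)⟩) (fun i => key _ ⟨i, Or.inr (Or.inr rfl)⟩) r
  have h2 : r * u ∈ W := hr u (Submodule.subset_span (by simp))
  obtain ⟨α, β, hab⟩ := Submodule.mem_span_pair.1 h2
  exact ⟨α, β, hab.symm⟩

theorem tA_soc (h : t * b2 ≠ 0) (h1 : (1 : ZMod m) ≠ 0) (j : ZMod m) :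
    tA K m b1 b2 t j ∈ socAlg (Tilde K m b1 b2 t) := by
  obtain ⟨d, hd, hABA⟩ := tABA b1 b2 t h h1 j
  have hne : j ≠ j + 1 := by simpa using h1
  have hsrc : tE K m b1 b2 t (j + 1) * (tB K m b1 b2 t j * tA K m b1 b2 t j) =
      tB K m b1 b2 t j * tA K m b1 b2 t j := by rw [← mul_assoc, tB_src]
  refine mem_soc (tA K m b1 b2 t j) (tB K m b1 b2 t j * tA K m b1 b2 t j)
    (tE K m b1 b2 t j) (tE K m b1 b2 t (j + 1)) (tA K m b1 b2 t j) d hd (tA_src _ _ _ _)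
    (by rw [← mul_assoc, tEB _ _ _ _ _ hne, zero_mul]) (tEA _ _ _ _ _ hne.symm) hsrc hABA ?_
  apply t_closed
  have hu : tA K m b1 b2 t j ∈
    Submodule.span K {tA K m b1 b2 t j, tB K m b1 b2 t j * tA K m b1 b2 t j} :=
    Submodule.subset_span (by simp)
  have hw : tB K m b1 b2 t j * tA K m b1 b2 t j ∈
    Submodule.span K {tA K m b1 b2 t j, tB K m b1 b2 t j * tA K m b1 b2 t j} :=
    Submodule.subset_span (by simp)
  rintro r ⟨i, rfl | rfl | rfl⟩ z (rfl | rfl)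
  · change tE K m b1 b2 t i * _ ∈ _
    by_cases hi : i = j
    · rw [hi, tA_src]; exact hu
    · rw [tEA _ _ _ _ _ hi]; exact Submodule.zero_mem _
  · change tE K m b1 b2 t i * _ ∈ _
    by_cases hi : i = j + 1
    · rw [hi, hsrc]; exact hw
    · rw [← mul_assoc, tEB _ _ _ _ _ hi, zero_mul]; exact Submodule.zero_mem _
  · change tA K m b1 b2 t i * _ ∈ _
    rw [tAA]; exact Submodule.zero_mem _
  · change tA K m b1 b2 t i * _ ∈ _
    by_cases hi : i = j
    · rw [hi, hABA]; exact Submodule.smul_mem _ _ hu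
    · rw [← mul_assoc, tAB _ _ _ _ _ hi, zero_mul]; exact Submodule.zero_mem _
  · change tB K m b1 b2 t i * _ ∈ _
    by_cases hi : i = j
    · rw [hi]; exact hw
    · rw [tBA _ _ _ _ _ hi]; exact Submodule.zero_mem _
  · change tB K m b1 b2 t i * _ ∈ _
    rw [← mul_assoc, tBB, zero_mul]; exact Submodule.zero_mem _

theorem tB_soc (h : t * b2 ≠ 0) (h1 : (1 : ZMod m) ≠ 0) (j : ZMod m) :
    tB K m b1 b2 t j ∈ socAlg (Tilde K m b1 b2 t) := by
  obtain ⟨d, hd, hBAB⟩ := tBAB b1 b2 t h h1 j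
  have hne : j ≠ j + 1 := by simpa using h1
  have hsrc : tE K m b1 b2 t j * (tA K m b1 b2 t j * tB K m b1 b2 t j) =
      tA K m b1 b2 t j * tB K m b1 b2 t j := by rw [← mul_assoc, tA_src]
  refine mem_soc (tB K m b1 b2 t j) (tA K m b1 b2 t j * tB K m b1 b2 t j)
    (tE K m b1 b2 t (j + 1)) (tE K m b1 b2 t j) (tB K m b1 b2 t j) d hd (tB_src _ _ _ _)
    (by rw [← mul_assoc, tEA _ _ _ _ _ hne.symm, zero_mul]) (tEB _ _ _ _ _ hne) hsrc hBAB ?_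
  apply t_closed
  have hu : tB K m b1 b2 t j ∈
    Submodule.span K {tB K m b1 b2 t j, tA K m b1 b2 t j * tB K m b1 b2 t j} :=
    Submodule.subset_span (by simp)
  have hw : tA K m b1 b2 t j * tB K m b1 b2 t j ∈
    Submodule.span K {tB K m b1 b2 t j, tA K m b1 b2 t j * tB K m b1 b2 t j} :=
    Submodule.subset_span (by simp)
  rintro r ⟨i, rfl | rfl | rfl⟩ z (rfl | rfl)
  · change tE K m b1 b2 t i * _ ∈ _
    by_cases hi : i = j + 1
    · rw [hi, tB_src]; exact hu
    · rw [tEB _ _ _ _ _ hi]; exact Submodule.zero_mem _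
  · change tE K m b1 b2 t i * _ ∈ _
    by_cases hi : i = j
    · rw [hi, hsrc]; exact hw
    · rw [← mul_assoc, tEA _ _ _ _ _ hi, zero_mul]; exact Submodule.zero_mem _
  · change tA K m b1 b2 t i * _ ∈ _
    by_cases hi : i = j
    · rw [hi]; exact hw
    · rw [tAB _ _ _ _ _ hi]; exact Submodule.zero_mem _
  · change tA K m b1 b2 t i * _ ∈ _
    rw [← mul_assoc, tAA, zero_mul]; exact Submodule.zero_mem _
  · change tB K m b1 b2 t i * _ ∈ _
    rw [tBB]; exact Submodule.zero_mem _
  · change tB K m b1 b2 t i * _ ∈ _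
    by_cases hi : i = j
    · rw [hi, hBAB]; exact Submodule.smul_mem _ _ hu
    · rw [← mul_assoc, tBA _ _ _ _ _ hi, zero_mul]; exact Submodule.zero_mem _

/-- The deformed algebra coincides with its socle. -/
theorem tilde_soc_top (h : t * b2 ≠ 0) (h1 : (1 : ZMod m) ≠ 0) :
    socAlg (Tilde K m b1 b2 t) = ⊤ := by
  have hAB : ∀ i, tA K m b1 b2 t i * tB K m b1 b2 t i ∈ socAlg (Tilde K m b1 b2 t) :=
    fun i => Submodule.smul_mem _ _ (tB_soc b1 b2 t h h1 i)
  have hBA : ∀ i, tB K m b1 b2 t i * tA K m b1 b2 t i ∈ socAlg (Tilde K m b1 b2 t) :=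
    fun i => Submodule.smul_mem _ _ (tA_soc b1 b2 t h h1 i)
  have hsm : ∀ (c : K) (x : Tilde K m b1 b2 t), x ∈ socAlg (Tilde K m b1 b2 t) →
      c • x ∈ socAlg (Tilde K m b1 b2 t) := by
    intro c x hx
    rw [Algebra.smul_def]
    exact Submodule.smul_mem _ _ hx
  have hinv : ∀ (c : K) (x : Tilde K m b1 b2 t), c ≠ 0 → c • x ∈ socAlg (Tilde K m b1 b2 t) →
      x ∈ socAlg (Tilde K m b1 b2 t) := by
    intro c x hc hx
    have := hsm c⁻¹ _ hx
    rwa [inv_smul_smul₀ hc] at this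
  have hE : ∀ i, tE K m b1 b2 t i ∈ socAlg (Tilde K m b1 b2 t) := by
    intro i
    by_cases hi : i = 0
    · subst hi
      apply hinv (t * b2) _ h
      exact ring_aux3 _ (t_comm0 b1 b2 t) (hsm _ _ (hAB 0)) (hBA _)
    · apply hinv (cc b2 t i) _ (cc_ne b2 t h i)
      exact ring_aux3 _ (t_comm b1 b2 t i hi) (hAB i) (hBA _)
  rw [Submodule.eq_top_iff_forall_basis_mem (Module.Basis.singleton Unit _)]
  intro _
  rw [Module.Basis.singleton_apply, ← tE_total b1 b2 t]
  exact Submodule.sum_mem _ (fun i _ => hE i)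

/-- The dimension estimate. -/
theorem tilde_rank (h : t * b2 ≠ 0) (hm : 4 ≤ m) :
    (2 * m : Cardinal) ≤ Module.rank K (Tilde K m b1 b2 t) := by
  let ι := {k : ZMod m // k ≠ 0 ∧ k + 1 ≠ 0}
  let Φ : Tilde K m b1 b2 t →ₗ[K] (ι × Fin 2 × Fin 2 → K) :=
    { toFun := fun x q => tildeRep b1 b2 t q.1.1 q.1.2.1 q.1.2.2 x q.2.1 q.2.2
      map_add' := by intro x y; ext q; simp
      map_smul' := by intro c x; ext q; simp }
  have hΦ : ∀ x q, Φ x q = tildeRep b1 b2 t q.1.1 q.1.2.1 q.1.2.2 x q.2.1 q.2.2 :=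
    fun _ _ => rfl
  have hsurj : Function.Surjective Φ := by
    rw [← LinearMap.range_eq_top, eq_top_iff, ← (Pi.basisFun K (ι × Fin 2 × Fin 2)).span_eq,
      Submodule.span_le]
    rintro _ ⟨⟨k, p, q⟩, rfl⟩
    rw [Pi.basisFun_apply]
    have hc := cc_ne b2 t h k.1
    have aux : ∀ x : Tilde K m b1 b2 t,
        (∀ k' : ι, ∀ p' q', tildeRep b1 b2 t k'.1 k'.2.1 k'.2.2 x p' q' =
          if k.1 = k'.1 ∧ p = p' ∧ q = q' then 1 else 0) →
        Pi.single (k, p, q) (1 : K) ∈ (LinearMap.range Φ : Set (ι × Fin 2 × Fin 2 → K)) := by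
      intro x hx
      refine ⟨x, ?_⟩
      ext ⟨k', p', q'⟩
      rw [hΦ, hx, Pi.single_apply]
      congr 1
      simp only [Prod.mk.injEq, eq_iff_iff]
      constructor
      · rintro ⟨a, b, c⟩; exact ⟨Subtype.ext a.symm, b.symm, c.symm⟩
      · rintro ⟨a, b, c⟩; exact ⟨congrArg Subtype.val a.symm, b.symm, c.symm⟩
    fin_cases p <;> fin_cases q
    · apply aux ((cc b2 t k.1)⁻¹ • (tA K m b1 b2 t k.1 * tB K m b1 b2 t k.1))
      intro k' p' q'
      rw [map_smul, map_mul, tildeRep_a, tildeRep_b]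
      by_cases hk : k.1 = k'.1
      · rw [← hk]; fin_cases p' <;> fin_cases q' <;> simp [hc]
      · fin_cases p' <;> fin_cases q' <;> simp [hk]
    · apply aux (tA K m b1 b2 t k.1)
      intro k' p' q'
      rw [tildeRep_a]
      by_cases hk : k.1 = k'.1
      · rw [← hk]; fin_cases p' <;> fin_cases q' <;> simp
      · fin_cases p' <;> fin_cases q' <;> simp [hk]
    · apply aux ((cc b2 t k.1)⁻¹ • tB K m b1 b2 t k.1)
      intro k' p' q'
      rw [map_smul, tildeRep_b]
      by_cases hk : k.1 = k'.1
      · rw [← hk]; fin_cases p' <;> fin_cases q' <;> simp [hc]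
      · fin_cases p' <;> fin_cases q' <;> simp [hk]
    · apply aux ((cc b2 t k.1)⁻¹ • (tB K m b1 b2 t k.1 * tA K m b1 b2 t k.1))
      intro k' p' q'
      rw [map_smul, map_mul, tildeRep_a, tildeRep_b]
      by_cases hk : k.1 = k'.1
      · rw [← hk]; fin_cases p' <;> fin_cases q' <;> simp [hc]
      · fin_cases p' <;> fin_cases q' <;> simp [hk]
  have hr := LinearMap.rank_le_of_surjective Φ hsurj
  refine le_trans ?_ hr
  rw [rank_fun']
  have hcard : m - 2 ≤ Fintype.card ι := by
    have h1 : Fintype.card ι = ((({0, -1} : Finset (ZMod m)))ᶜ).card := by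
      rw [Fintype.card_subtype]
      congr 1
      ext k
      simp [eq_neg_iff_add_eq_zero]
    rw [h1, Finset.card_compl, ZMod.card]
    have := Finset.card_le_two (a := (0 : ZMod m)) (b := -1)
    omega
  have : 2 * m ≤ Fintype.card (ι × Fin 2 × Fin 2) := by
    rw [Fintype.card_prod, Fintype.card_prod, Fintype.card_fin]
    omega
  exact_mod_cast this

end Helpers

/-- for `m ≥ 4` and `t b₂ ≠ 0`, the socle of `Λ̃` has `K`-dimension at least
`2m`, and `Λ̃/soc(Λ̃)` is not isomorphic to `Λ/soc(Λ)` as a `K`-algebra, so `Λ̃` is not a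
socle deformation of `Λ`. -/
theorem tilde_not_socle_deformation_of_b2_ne_zero
    (K : Type) [Field K] (m : ℕ) [NeZero m] (hm : 4 ≤ m)
    (b1 b2 t : K) (h : t * b2 ≠ 0) :
    (2 * m : Cardinal) ≤
        Module.rank K ↥(Submodule.restrictScalars K (socAlg (Tilde K m b1 b2 t))) ∧
    ¬ Nonempty (socQuot K (Tilde K m b1 b2 t) ≃ₐ[K] socQuot K (Lam K m (fun _ => 1))) := by
  have h1 : (1 : ZMod m) ≠ 0 := by
    haveI : Fact (1 < m) := ⟨by omega⟩
    exact one_ne_zero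
  have htop := tilde_soc_top b1 b2 t h h1
  constructor
  · rw [htop, Submodule.restrictScalars_top, rank_top]
    exact tilde_rank b1 b2 t h hm
  · rintro ⟨f⟩
    have h0 : (1 : socQuot K (Tilde K m b1 b2 t)) = 0 := by
      have hrel : (fun x y : Tilde K m b1 b2 t => x - y ∈ socAlg (Tilde K m b1 b2 t)) 1 0 := by
        simp [htop]
      have := RingQuot.mkAlgHom_rel K
        (s := fun x y : Tilde K m b1 b2 t => x - y ∈ socAlg (Tilde K m b1 b2 t)) hrel
      simpa using this
    apply lam_socQuot_one_ne (K := K) (m := m)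
    have := congrArg f h0
    simpa using this
end
end
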